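/- arXiv:2603.20944 — 3 statements merged into one kernel-verified Lean document; each statement's English description precedes it below -/
import Mathlib

section
/- Let β > 2, ρ > 0, 0 < κ < 1/2 with 2κ < ρ, and assume α_N·p(N) = N^{−ρ} where p(N) ∈ (0,1] and N·p(N) → ∞. Then μ^ε_{N,α_N,β}((m₁(σ), m₂(σ)) ∉ A_κ^N) → 0 with ε-probability 1 − o(1), i.e. for every η > 0 the P-probability that μ^ε_{N,α_N,β}((m₁,m₂) ∉ A_κ^N) > η tends to 0 as N → ∞ through even integers. -/
open MeasureTheory Filter

noncomputable section

/-- The spin value ±1 associated to a Boolean. -/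
def spinVal (s : Bool) : ℝ := if s then 1 else -1

/-- A spin configuration on `N = 2n` sites, split into the two blocks
`B₁` (first component) and `B₂` (second component); the perfect matching
pairs the `i`-th spin of `B₁` with the `i`-th spin of `B₂`. -/
abbrev TwoConf (n : ℕ) := (Fin n → Bool) × (Fin n → Bool)

/-- Block magnetization `m₁(σ) = (2/N) ∑_{i ∈ B₁} σᵢ` with `N = 2n`. -/
def mag1 (n : ℕ) (σ : TwoConf n) : ℝ := (2 / (2 * n : ℝ)) * ∑ i, spinVal (σ.1 i)

/-- Block magnetization `m₂(σ) = (2/N) ∑_{i ∈ B₂} σᵢ` with `N = 2n`. -/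
def mag2 (n : ℕ) (σ : TwoConf n) : ℝ := (2 / (2 * n : ℝ)) * ∑ i, spinVal (σ.2 i)

/-- The diluted Hamiltonian
`H^ε_{N,α,β}(σ) = −(β/(2N))(∑_{i,j∈B₁} σᵢσⱼ + ∑_{i,j∈B₂} σᵢσⱼ)
  − α ∑_{i∈B₁} ε_i σᵢ σ_{i+N/2}` with `N = 2n`. -/
def dilH (n : ℕ) (α β : ℝ) (ε : Fin n → Bool) (σ : TwoConf n) : ℝ :=
  -(β / (2 * (2 * n : ℝ))) *
      ((∑ i, ∑ j, spinVal (σ.1 i) * spinVal (σ.1 j)) +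
        ∑ i, ∑ j, spinVal (σ.2 i) * spinVal (σ.2 j))
    - α * ∑ i, (if ε i then (1 : ℝ) else 0) * (spinVal (σ.1 i) * spinVal (σ.2 i))

/-- The distribution of the magnetization vector `(m₁, m₂)` under the quenched Gibbs
measure `μ^ε_{N,α,β}`, i.e. the pushforward of `μ^ε_{N,α,β}` under `σ ↦ (m₁(σ), m₂(σ))`. -/
def dilMagDist (n : ℕ) (α β : ℝ) (ε : Fin n → Bool) : Measure (ℝ × ℝ) :=
  (∑ σ : TwoConf n, ENNReal.ofReal (Real.exp (-dilH n α β ε σ)))⁻¹ •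
    ∑ σ : TwoConf n,
      ENNReal.ofReal (Real.exp (-dilH n α β ε σ)) • Measure.dirac (mag1 n σ, mag2 n σ)

/-- The probability, under i.i.d. Bernoulli(q) dilution variables `(ε_i)_{i ∈ B₁}`,
of a set `A` of dilution configurations. -/
def bernProb (n : ℕ) (q : ℝ) (A : Set (Fin n → Bool)) : ℝ :=
  ∑ ε : Fin n → Bool, A.indicator (fun ε => ∏ i, if ε i then q else 1 - q) ε

/-- Membership in the typical set `A_κ^N ⊆ [−1,1]²`: the union over sign choices
`s₁, s₂ ∈ {+,−}` of the open squares of half-width `N^{−κ}` centered at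
`(m^{s₁}(β/2), m^{s₂}(β/2))`, where `mp = m⁺(β/2)` and `m⁻(β/2) = −mp`. -/
def memTyp (mp κ : ℝ) (N : ℕ) (x : ℝ × ℝ) : Prop :=
  ∃ s₁ s₂ : Bool,
    |x.1 - (if s₁ then mp else -mp)| < (N : ℝ) ^ (-κ) ∧
    |x.2 - (if s₂ then mp else -mp)| < (N : ℝ) ^ (-κ)


/-! ### Calculus facts -/

lemma aux_tanh_hasDerivAt (x : ℝ) :
    HasDerivAt Real.tanh (1 / Real.cosh x ^ 2) x := by
  have h1 := (Real.hasDerivAt_sinh x).div (Real.hasDerivAt_cosh x) (Real.cosh_pos x).ne'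
  have h2 : (Real.sinh / Real.cosh) = Real.tanh := by
    funext y
    simp [Real.tanh_eq_sinh_div_cosh]
  rw [h2] at h1
  refine h1.congr_deriv ?_
  congr 1
  have := Real.cosh_sq x
  nlinarith

lemma aux_tanh_concave : ConcaveOn ℝ (Set.Ici 0) Real.tanh := by
  have hd : deriv Real.tanh = fun x => 1 / Real.cosh x ^ 2 :=
    funext fun x => (aux_tanh_hasDerivAt x).deriv
  apply AntitoneOn.concaveOn_of_deriv (convex_Ici 0)
  · exact fun x _ => (aux_tanh_hasDerivAt x).continuousAt.continuousWithinAt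
  · exact fun x _ => (aux_tanh_hasDerivAt x).differentiableAt.differentiableWithinAt
  · rw [hd, interior_Ici]
    intro x hx y hy hxy
    have hx0 : (0 : ℝ) < x := hx
    have hy0 : (0 : ℝ) < y := hy
    have : Real.cosh x ≤ Real.cosh y := by
      rw [Real.cosh_le_cosh, abs_of_pos hx0, abs_of_pos hy0]; exact hxy
    have hc := Real.cosh_pos x
    dsimp only
    gcongr

lemma aux_k_concave (γ : ℝ) (hγ : 0 < γ) :
    ConcaveOn ℝ (Set.Ici 0) (fun x => Real.tanh (γ * x) - x) := by
  refine ⟨convex_Ici 0, ?_⟩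
  intro x hx y hy a b ha hb hab
  have hx0 : (0 : ℝ) ≤ x := hx
  have hy0 : (0 : ℝ) ≤ y := hy
  have h := aux_tanh_concave.2 (x := γ * x) (y := γ * y) (Set.mem_Ici.2 (by positivity))
    (Set.mem_Ici.2 (by positivity)) ha hb hab
  simp only [smul_eq_mul] at h ⊢
  have e : γ * (a * x + b * y) = a * (γ * x) + b * (γ * y) := by ring
  rw [e]
  linarith

lemma aux_mp_pos (γ : ℝ) (hγ : 1 < γ) (mp : ℝ)
    (hmax : ∀ z : ℝ, z = Real.tanh (γ * z) → z ≤ mp) : 0 < mp := by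
  have hcont : Continuous (fun x : ℝ => x - Real.tanh (γ * x)) := by
    have : Continuous Real.tanh :=
      continuous_iff_continuousAt.2 fun x => (aux_tanh_hasDerivAt x).continuousAt
    fun_prop
  obtain ⟨x, hx0, hx1, hx⟩ : ∃ x : ℝ, 0 < x ∧ x < 1 ∧ x < Real.tanh (γ * x) := by
    have hev : ∀ᶠ x : ℝ in nhds 0, 1 < γ * (1 - (γ * x) ^ 2 / 2) := by
      have : ContinuousAt (fun x : ℝ => γ * (1 - (γ * x) ^ 2 / 2)) 0 := by fun_prop
      apply this.eventually_const_lt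
      simpa using hγ
    have h2 : ∀ᶠ x : ℝ in nhdsWithin 0 (Set.Ioi 0), x ∈ Set.Ioo (0 : ℝ) 1 :=
      Ioo_mem_nhdsGT one_pos
    obtain ⟨x, hx, hx'⟩ := ((hev.filter_mono nhdsWithin_le_nhds).and h2).exists
    refine ⟨x, hx'.1, hx'.2, ?_⟩
    have hx0 := hx'.1
    have hy : 0 < γ * x := by positivity
    rw [Real.tanh_eq_sinh_div_cosh, lt_div_iff₀ (Real.cosh_pos _)]
    have h3 := Real.self_le_sinh_iff.2 hy.le
    have h4 := Real.cosh_le_exp_half_sq (γ * x)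
    have h5 : 1 - (γ * x) ^ 2 / 2 ≤ Real.exp (-((γ * x) ^ 2 / 2)) := by
      have := Real.add_one_le_exp (-((γ * x) ^ 2 / 2)); linarith
    have h6 : 1 < γ * Real.exp (-((γ * x) ^ 2 / 2)) := by nlinarith
    have h7 : Real.exp ((γ * x) ^ 2 / 2) < γ := by
      rw [Real.exp_neg, ← div_eq_mul_inv, lt_div_iff₀ (Real.exp_pos _)] at h6
      linarith
    nlinarith
  have h1 : Real.tanh (γ * 1) < 1 := by
    rw [Real.tanh_eq_sinh_div_cosh, div_lt_one (Real.cosh_pos _)]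
    exact Real.sinh_lt_cosh _
  have hivt := intermediate_value_Icc hx1.le hcont.continuousOn
  obtain ⟨z, hz, hz'⟩ := hivt (show (0 : ℝ) ∈ Set.Icc _ _ from ⟨by linarith, by linarith⟩)
  have := hmax z (by simp only at hz'; linarith)
  linarith [hz.1]

lemma aux_half (γ mp : ℝ) (hγ : 1 < γ) (hmp : 0 < mp) (hfix : mp = Real.tanh (γ * mp)) :
    0 < Real.tanh (γ * (mp / 2)) - mp / 2 := by
  set y := γ * (mp / 2) with hy
  have hy0 : 0 < y := by positivity
  have e : γ * mp = 2 * y := by rw [hy]; ring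
  rw [e, Real.tanh_eq_sinh_div_cosh, Real.sinh_two_mul, Real.cosh_two_mul] at hfix
  have hs : 0 < Real.sinh y := Real.sinh_pos_iff.2 hy0
  have hc := Real.cosh_pos y
  rw [hfix, Real.tanh_eq_sinh_div_cosh]
  have hlt : 2 * Real.sinh y * Real.cosh y / (Real.cosh y ^ 2 + Real.sinh y ^ 2) / 2
      < Real.sinh y / Real.cosh y := by
    rw [div_div, div_lt_div_iff₀ (by positivity) hc]
    nlinarith [pow_pos hs 3, mul_pos hs hc]
  linarith

/-- The (negative) free energy functional. -/
def auxPhi (γ x : ℝ) : ℝ := Real.log (Real.cosh (γ * x)) - γ * x ^ 2 / 2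

lemma auxPhi_hasDerivAt (γ x : ℝ) :
    HasDerivAt (auxPhi γ) (γ * (Real.tanh (γ * x) - x)) x := by
  have h0 : HasDerivAt (fun x : ℝ => γ * x) γ x := by
    simpa using (hasDerivAt_id x).const_mul γ
  have h1 := (h0.cosh).log (Real.cosh_pos (γ * x)).ne'
  have h2 : HasDerivAt (fun x : ℝ => γ * x ^ 2 / 2) (γ * x) x := by
    have := ((hasDerivAt_pow 2 x).const_mul γ).div_const 2
    refine this.congr_deriv ?_
    simp; ring
  have h3 := h1.sub h2
  refine HasDerivAt.congr_deriv (f := auxPhi γ) h3 ?_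
  rw [Real.tanh_eq_sinh_div_cosh]; ring

lemma auxPhi_abs (γ x : ℝ) : auxPhi γ |x| = auxPhi γ x := by
  rcases abs_choice x with h | h <;> rw [h]
  simp [auxPhi]

lemma auxPhi_bound (γ mp : ℝ) (hγ : 1 < γ) (hmp : 0 < mp) (hfix : mp = Real.tanh (γ * mp)) :
    ∃ c : ℝ, 0 < c ∧ ∀ x : ℝ, auxPhi γ x ≤ auxPhi γ mp - c * (|x| - mp) ^ 2 := by
  have hγ0 : 0 < γ := by linarith
  have hv := aux_half γ mp hγ hmp hfix
  have hconc := aux_k_concave γ hγ0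
  set k : ℝ → ℝ := fun x => Real.tanh (γ * x) - x with hk
  have hkm : k mp = 0 := by simp only [hk]; linarith
  have hk0 : k 0 = 0 := by simp [hk]
  set v := k (mp / 2) with hvdef
  have hv : 0 < v := hv
  set e := v / (mp / 2) with he
  have he0 : 0 < e := by positivity
  have hev : v = e * (mp / 2) := by rw [he]; field_simp
  have hright : ∀ x, mp < x → k x ≤ - e * (x - mp) := by
    intro x hx
    have := hconc.slope_anti_adjacent (x := mp / 2) (y := mp) (z := x)
      (Set.mem_Ici.2 (by linarith)) (Set.mem_Ici.2 (by linarith)) (by linarith) hx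
    rw [div_le_div_iff₀ (by linarith) (by linarith), hkm, ← hvdef, hev] at this
    nlinarith
  have hmid : ∀ x, mp / 2 < x → x < mp → e * (mp - x) ≤ k x := by
    intro x hx hx'
    have := hconc.slope_anti_adjacent (x := mp / 2) (y := x) (z := mp)
      (Set.mem_Ici.2 (by linarith)) (Set.mem_Ici.2 (by linarith)) hx hx'
    rw [div_le_div_iff₀ (by linarith) (by linarith), hkm, ← hvdef, hev] at this
    nlinarith
  have hleft : ∀ x, 0 < x → x < mp / 2 → 0 ≤ k x := by
    intro x hx hx'
    have := hconc.slope_anti_adjacent (x := 0) (y := x) (z := mp)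
      (Set.mem_Ici.2 (by linarith)) (Set.mem_Ici.2 (by linarith)) hx (by linarith)
    rw [div_le_div_iff₀ (by linarith) (by linarith), hkm, hk0] at this
    nlinarith
  have hder : ∀ c x : ℝ, HasDerivAt (fun x => auxPhi γ x + c * (x - mp) ^ 2)
      (γ * k x + 2 * c * (x - mp)) x := by
    intro c x
    have h1 := (((hasDerivAt_id x).sub_const mp).pow 2).const_mul c
    have h2 := (auxPhi_hasDerivAt γ x).add h1
    refine HasDerivAt.congr_deriv (f := fun x => auxPhi γ x + c * (x - mp) ^ 2) h2 ?_
    simp [hk]; ring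
  have hcontc : ∀ c : ℝ, ∀ s : Set ℝ,
      ContinuousOn (fun x => auxPhi γ x + c * (x - mp) ^ 2) s :=
    fun c s x _ => (hder c x).continuousAt.continuousWithinAt
  have hdiff : ∀ c : ℝ, ∀ s : Set ℝ,
      DifferentiableOn ℝ (fun x => auxPhi γ x + c * (x - mp) ^ 2) s :=
    fun c s x _ => (hder c x).differentiableAt.differentiableWithinAt
  set C := γ * e / 2 with hC
  have hC0 : 0 < C := by positivity
  have b1 : ∀ x, mp ≤ x → auxPhi γ x + C * (x - mp) ^ 2 ≤ auxPhi γ mp := by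
    intro x hx
    have := antitoneOn_of_deriv_nonpos (convex_Ici mp) (hcontc C _) (hdiff C _) (by
      intro y hy
      rw [interior_Ici] at hy
      rw [(hder C y).deriv]
      have := hright y hy
      rw [hC]
      nlinarith) (Set.mem_Ici.2 le_rfl) (Set.mem_Ici.2 hx) hx
    simpa using this
  have b2 : ∀ x, mp / 2 ≤ x → x ≤ mp → auxPhi γ x + C * (x - mp) ^ 2 ≤ auxPhi γ mp := by
    intro x hx hx'
    have := monotoneOn_of_deriv_nonneg (convex_Icc (mp / 2) mp) (hcontc C _) (hdiff C _) (by
      intro y hy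
      rw [interior_Icc] at hy
      rw [(hder C y).deriv]
      have := hmid y hy.1 hy.2
      rw [hC]
      nlinarith) (Set.mem_Icc.2 ⟨hx, hx'⟩) (Set.mem_Icc.2 ⟨by linarith, le_rfl⟩) hx'
    simpa using this
  have b3 : ∀ x, 0 ≤ x → x ≤ mp / 2 → auxPhi γ x ≤ auxPhi γ (mp / 2) := by
    intro x hx hx'
    have := monotoneOn_of_deriv_nonneg (convex_Icc 0 (mp / 2)) (hcontc 0 _) (hdiff 0 _) (by
      intro y hy
      rw [interior_Icc] at hy
      rw [(hder 0 y).deriv]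
      have := hleft y hy.1 hy.2
      have := mul_nonneg hγ0.le this
      linarith) (Set.mem_Icc.2 ⟨hx, hx'⟩) (Set.mem_Icc.2 ⟨by linarith, le_rfl⟩) hx'
    simpa using this
  refine ⟨C / 4, by positivity, ?_⟩
  intro x
  rw [← auxPhi_abs γ x]
  have hx0 := abs_nonneg x
  generalize |x| = z at hx0
  have hsq : 0 ≤ C * (z - mp) ^ 2 := by positivity
  rcases le_total mp z with h | h
  · have := b1 z h; linarith
  · rcases le_total (mp / 2) z with h' | h'
    · have := b2 z h' h; linarith
    · have h1 := b3 z hx0 h'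
      have h2 := b2 (mp / 2) le_rfl (by linarith)
      have h3 : C * (z - mp) ^ 2 ≤ C * mp ^ 2 := by
        apply mul_le_mul_of_nonneg_left _ hC0.le
        nlinarith
      nlinarith

/-! ### Curie-Weiss block estimates -/

/-- Total spin of one block. -/
def auxS (n : ℕ) (τ : Fin n → Bool) : ℝ := ∑ i, spinVal (τ i)

/-- Curie-Weiss weight of one block. -/
def auxW (γ : ℝ) (n : ℕ) (τ : Fin n → Bool) : ℝ := Real.exp (γ / (2 * n) * auxS n τ ^ 2)

lemma aux_sum_exp (n : ℕ) (s : ℝ) :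
    ∑ τ : Fin n → Bool, Real.exp (s * auxS n τ) = (2 * Real.cosh s) ^ n := by
  have h := Fintype.prod_sum (fun (_ : Fin n) (b : Bool) => Real.exp (s * spinVal b))
  have h2 : ∑ b : Bool, Real.exp (s * spinVal b) = 2 * Real.cosh s := by
    simp [spinVal, Real.cosh_eq]; ring
  rw [h2] at h
  simp only [Finset.prod_const, Finset.card_univ, Fintype.card_fin] at h
  rw [h]
  refine Finset.sum_congr rfl fun τ _ => ?_
  rw [auxS, Finset.mul_sum, Real.exp_sum]

lemma aux_phi_pow (n : ℕ) (γ x : ℝ) :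
    (2 * Real.cosh (γ * x)) ^ n * Real.exp (-(n * (γ * x ^ 2 / 2)))
      = 2 ^ n * Real.exp (n * auxPhi γ x) := by
  rw [auxPhi, mul_sub, sub_eq_add_neg, Real.exp_add, Real.exp_nat_mul,
    Real.exp_log (Real.cosh_pos _), mul_pow, mul_assoc]

lemma aux_tilt (n : ℕ) (γ x : ℝ) :
    ∑ τ : Fin n → Bool, Real.exp (γ * x * auxS n τ - n * (γ * x ^ 2 / 2))
      = 2 ^ n * Real.exp (n * auxPhi γ x) := by
  rw [← aux_phi_pow, ← aux_sum_exp, Finset.sum_mul]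
  refine Finset.sum_congr rfl fun τ _ => ?_
  rw [sub_eq_add_neg, Real.exp_add]

lemma aux_lowerZ (n : ℕ) (hn : 0 < n) (γ x : ℝ) (hγ : 0 < γ) :
    2 ^ n * Real.exp (n * auxPhi γ x) ≤ ∑ τ, auxW γ n τ := by
  rw [← aux_tilt]
  refine Finset.sum_le_sum fun τ _ => ?_
  rw [auxW]
  apply Real.exp_le_exp.2
  have hn' : (0 : ℝ) < n := by exact_mod_cast hn
  have : γ / (2 * n) * auxS n τ ^ 2 - (γ * x * auxS n τ - n * (γ * x ^ 2 / 2))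
      = γ / (2 * n) * (auxS n τ - n * x) ^ 2 := by field_simp; ring
  have h2 : 0 ≤ γ / (2 * n) * (auxS n τ - n * x) ^ 2 := by positivity
  linarith

lemma aux_S_val (n : ℕ) (τ : Fin n → Bool) :
    ∃ k ∈ Finset.range (n + 1), auxS n τ = 2 * (k : ℝ) - n := by
  refine ⟨(Finset.univ.filter fun i => τ i = true).card, ?_, ?_⟩
  · rw [Finset.mem_range]
    have := Finset.card_le_univ (Finset.univ.filter fun i => τ i = true)
    rw [Fintype.card_fin] at this
    omega
  · have : ∀ i, spinVal (τ i) = 2 * (if τ i = true then (1 : ℝ) else 0) - 1 := by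
      intro i; unfold spinVal; split_ifs <;> norm_num
    rw [auxS, Finset.sum_congr rfl fun i _ => this i, Finset.sum_sub_distrib, ← Finset.mul_sum,
      Finset.sum_boole]
    simp

open Classical in
lemma aux_upperB (n : ℕ) (hn : 0 < n) (γ mp c δ : ℝ) (hc : 0 < c) (hδ : 0 ≤ δ)
    (hb : ∀ x : ℝ, auxPhi γ x ≤ auxPhi γ mp - c * (|x| - mp) ^ 2) :
    ∑ τ, (if δ ≤ |(|auxS n τ / n| - mp)| then auxW γ n τ else 0)
      ≤ (n + 1) * (Real.exp (-(c * (n * δ ^ 2))) * (2 ^ n * Real.exp (n * auxPhi γ mp))) := by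
  have hn' : (0 : ℝ) < n := by exact_mod_cast hn
  let x : ℕ → ℝ := fun k => (2 * (k : ℝ) - n) / n
  have h1 : ∀ τ, (if δ ≤ |(|auxS n τ / n| - mp)| then auxW γ n τ else 0) ≤
      ∑ k ∈ Finset.range (n + 1), if δ ≤ |(|x k| - mp)| then
        Real.exp (γ * x k * auxS n τ - n * (γ * x k ^ 2 / 2)) else 0 := by
    intro τ
    obtain ⟨k, hk, hS⟩ := aux_S_val n τ
    have hx : auxS n τ / n = x k := by rw [hS]
    have hx2 : auxS n τ = n * x k := by rw [← hx]; field_simp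
    refine le_trans ?_ (Finset.single_le_sum (f := fun k => if δ ≤ |(|x k| - mp)| then
        Real.exp (γ * x k * auxS n τ - n * (γ * x k ^ 2 / 2)) else 0) ?_ hk)
    · simp only [hx]
      split_ifs
      · rw [auxW, hx2]
        apply Real.exp_le_exp.2
        apply le_of_eq
        field_simp
        ring
      · exact le_rfl
    · intro j _
      split_ifs
      · exact (Real.exp_pos _).le
      · exact le_rfl
  refine (Finset.sum_le_sum fun τ _ => h1 τ).trans ?_
  rw [Finset.sum_comm]
  have h2 : ∀ k ∈ Finset.range (n + 1), (∑ τ, if δ ≤ |(|x k| - mp)| then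
        Real.exp (γ * x k * auxS n τ - n * (γ * x k ^ 2 / 2)) else 0) ≤
      Real.exp (-(c * (n * δ ^ 2))) * (2 ^ n * Real.exp (n * auxPhi γ mp)) := by
    intro k _
    by_cases h : δ ≤ |(|x k| - mp)|
    · simp only [h, if_true]
      rw [aux_tilt, mul_left_comm, ← Real.exp_add]
      apply mul_le_mul_of_nonneg_left _ (by positivity)
      apply Real.exp_le_exp.2
      have h3 : δ ^ 2 ≤ (|x k| - mp) ^ 2 := by
        rw [← sq_abs (|x k| - mp)]; gcongr
      have h4 := mul_le_mul_of_nonneg_left (hb (x k)) hn'.le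
      have h5 := mul_le_mul_of_nonneg_left h3 (mul_pos hc hn').le
      linarith
    · simp only [h, if_false, Finset.sum_const_zero]
      positivity
  refine (Finset.sum_le_sum h2).trans ?_
  simp

/-! ### Markov inequality for the dilution -/

lemma aux_bern_mean_one (n : ℕ) (q : ℝ) (j : Fin n) :
    ∑ ε : Fin n → Bool, (∏ i, if ε i then q else 1 - q) * (if ε j then (1 : ℝ) else 0) = q := by
  have h := Fintype.prod_sum (fun (i : Fin n) (b : Bool) =>
    (if b then q else 1 - q) * (if i = j then (if b then (1 : ℝ) else 0) else 1))
  have e : ∀ ε : Fin n → Bool,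
      (∏ i, if ε i then q else 1 - q) * (if ε j then (1 : ℝ) else 0)
      = ∏ i, (if ε i then q else 1 - q) * (if i = j then (if ε i then (1 : ℝ) else 0) else 1) := by
    intro ε
    rw [Finset.prod_mul_distrib]
    congr 1
    rw [Finset.prod_ite_eq' Finset.univ j (fun i => if ε i then (1 : ℝ) else 0)]
    simp
  rw [Finset.sum_congr rfl fun ε _ => e ε, ← h]
  have e2 : ∀ i : Fin n, ∑ b : Bool,
      (if b then q else 1 - q) * (if i = j then (if b then (1 : ℝ) else 0) else 1)
      = if i = j then q else 1 := by
    intro i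
    by_cases hij : i = j <;> simp [hij]
  rw [Finset.prod_congr rfl fun i _ => e2 i]
  simp

/-- Number of active couplings. -/
def auxE (n : ℕ) (ε : Fin n → Bool) : ℝ := ∑ i, (if ε i then (1 : ℝ) else 0)

lemma aux_bern_markov (n : ℕ) (q a : ℝ) (hq0 : 0 ≤ q) (hq1 : q ≤ 1) (ha : 0 < a)
    (A : Set (Fin n → Bool)) (hA : ∀ ε ∈ A, a ≤ auxE n ε) :
    bernProb n q A ≤ n * q / a := by
  have hmean : ∑ ε : Fin n → Bool, (∏ i, if ε i then q else 1 - q) * auxE n ε = n * q := by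
    simp only [auxE, Finset.mul_sum]
    rw [Finset.sum_comm, Finset.sum_congr rfl fun j _ => aux_bern_mean_one n q j]
    simp
  rw [le_div_iff₀ ha, ← hmean, bernProb, Finset.sum_mul]
  refine Finset.sum_le_sum fun ε _ => ?_
  have hw : 0 ≤ ∏ i, if ε i then q else 1 - q := by
    refine Finset.prod_nonneg fun i _ => ?_
    split_ifs <;> linarith
  have hE : 0 ≤ auxE n ε := Finset.sum_nonneg fun i _ => by split_ifs <;> norm_num
  by_cases h : ε ∈ A
  · rw [Set.indicator_of_mem h]
    exact mul_le_mul_of_nonneg_left (hA ε h) hw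
  · rw [Set.indicator_of_notMem h, zero_mul]
    positivity

lemma aux_bern_nonneg (n : ℕ) (q : ℝ) (hq0 : 0 ≤ q) (hq1 : q ≤ 1)
    (A : Set (Fin n → Bool)) : 0 ≤ bernProb n q A := by
  refine Finset.sum_nonneg fun ε _ => Set.indicator_nonneg (fun ε _ => ?_) _
  refine Finset.prod_nonneg fun i _ => ?_
  split_ifs <;> linarith

/-! ### Gibbs measure estimate -/

lemma aux_weight (n : ℕ) (α β : ℝ) (ε : Fin n → Bool) (σ : TwoConf n) :
    Real.exp (-dilH n α β ε σ) = auxW (β / 2) n σ.1 * auxW (β / 2) n σ.2 *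
      Real.exp (α * ∑ i, (if ε i then (1 : ℝ) else 0) * (spinVal (σ.1 i) * spinVal (σ.2 i))) := by
  rw [auxW, auxW, ← Real.exp_add, ← Real.exp_add, dilH]
  congr 1
  have h : ∀ τ : Fin n → Bool, ∑ i, ∑ j, spinVal (τ i) * spinVal (τ j) = auxS n τ ^ 2 := by
    intro τ
    rw [sq, auxS, Finset.sum_mul_sum]
  rw [h, h]
  have e : β / (2 * (2 * n : ℝ)) = β / 2 / (2 * n) := by rw [div_div]
  rw [e]
  ring

lemma aux_coupling (n : ℕ) (ε : Fin n → Bool) (σ : TwoConf n) :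
    |∑ i, (if ε i then (1 : ℝ) else 0) * (spinVal (σ.1 i) * spinVal (σ.2 i))| ≤ auxE n ε := by
  refine (Finset.abs_sum_le_sum_abs _ _).trans (Finset.sum_le_sum fun i _ => ?_)
  unfold spinVal
  split_ifs <;> norm_num

lemma aux_not_typ (mp κ : ℝ) (N : ℕ) (x : ℝ × ℝ) (h : ¬ memTyp mp κ N x) :
    (N : ℝ) ^ (-κ) ≤ |(|x.1| - mp)| ∨ (N : ℝ) ^ (-κ) ≤ |(|x.2| - mp)| := by
  by_contra hcon
  push Not at hcon
  apply h
  have key : ∀ y : ℝ, |(|y| - mp)| < (N : ℝ) ^ (-κ) →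
      ∃ s : Bool, |y - (if s then mp else -mp)| < (N : ℝ) ^ (-κ) := by
    intro y hy
    rcases abs_choice y with h | h
    · exact ⟨true, by rw [h] at hy; simpa using hy⟩
    · refine ⟨false, ?_⟩
      rw [h] at hy
      rw [← abs_neg] at hy
      have e : -(-y - mp) = y - (if false = true then mp else -mp) := by simp; ring
      rwa [e] at hy
  obtain ⟨s₁, h₁⟩ := key _ hcon.1
  obtain ⟨s₂, h₂⟩ := key _ hcon.2
  exact ⟨s₁, s₂, h₁, h₂⟩

open Classical in
lemma aux_dist_eq (n : ℕ) (α β : ℝ) (ε : Fin n → Bool) (S : Set (ℝ × ℝ)) :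
    dilMagDist n α β ε S = ENNReal.ofReal
      ((∑ σ : TwoConf n, if (mag1 n σ, mag2 n σ) ∈ S then Real.exp (-dilH n α β ε σ) else 0) /
        ∑ σ : TwoConf n, Real.exp (-dilH n α β ε σ)) := by
  have hpos : 0 < ∑ σ : TwoConf n, Real.exp (-dilH n α β ε σ) :=
    Finset.sum_pos (fun σ _ => Real.exp_pos _) Finset.univ_nonempty
  rw [dilMagDist, Measure.smul_apply, Measure.finsetSum_apply, div_eq_inv_mul,
    ENNReal.ofReal_mul (by positivity), ENNReal.ofReal_inv_of_pos hpos,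
    ENNReal.ofReal_sum_of_nonneg (fun σ _ => (Real.exp_pos _).le),
    ENNReal.ofReal_sum_of_nonneg (fun σ _ => by split_ifs <;> positivity), smul_eq_mul]
  congr 1
  refine Finset.sum_congr rfl fun σ _ => ?_
  rw [Measure.smul_apply, Measure.dirac_apply, smul_eq_mul]
  by_cases h : (mag1 n σ, mag2 n σ) ∈ S <;> simp [h]

open Classical in
lemma aux_gibbs (n : ℕ) (hn : 0 < n) (α β mp κ c : ℝ) (hα : 0 ≤ α) (hβ : 0 < β) (hc : 0 < c)
    (hb : ∀ x : ℝ, auxPhi (β / 2) x ≤ auxPhi (β / 2) mp - c * (|x| - mp) ^ 2)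
    (ε : Fin n → Bool) :
    dilMagDist n α β ε {x : ℝ × ℝ | ¬ memTyp mp κ (2 * n) x} ≤
      ENNReal.ofReal (2 * (n + 1) *
        Real.exp (2 * (α * auxE n ε) - c * (n * (((2 * n : ℕ) : ℝ) ^ (-κ)) ^ 2))) := by
  rw [aux_dist_eq]
  apply ENNReal.ofReal_le_ofReal
  have hn' : (0 : ℝ) < n := by exact_mod_cast hn
  have hpos : 0 < ∑ σ : TwoConf n, Real.exp (-dilH n α β ε σ) :=
    Finset.sum_pos (fun σ _ => Real.exp_pos _) Finset.univ_nonempty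
  rw [div_le_iff₀ hpos]
  set δ : ℝ := ((2 * n : ℕ) : ℝ) ^ (-κ) with hδ
  have hδ0 : 0 ≤ δ := by positivity
  set K := α * auxE n ε with hK
  set Z := ∑ τ, auxW (β / 2) n τ with hZ
  set b := ∑ τ, (if δ ≤ |(|auxS n τ / n| - mp)| then auxW (β / 2) n τ else 0) with hbdef
  have hWpos : ∀ τ, 0 < auxW (β / 2) n τ := fun τ => Real.exp_pos _
  have hL := aux_lowerZ n hn (β / 2) mp (by positivity)
  have hB := aux_upperB n hn (β / 2) mp c δ hc hδ0 hb
  rw [← hZ] at hL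
  rw [← hbdef] at hB
  have hZ0 : 0 ≤ Z := Finset.sum_nonneg fun τ _ => (hWpos τ).le
  have hbZ : b ≤ (n + 1) * (Real.exp (-(c * (n * δ ^ 2))) * Z) := by
    refine hB.trans ?_
    gcongr
  have habs : ∀ σ : TwoConf n, |α * ∑ i, (if ε i then (1 : ℝ) else 0) *
      (spinVal (σ.1 i) * spinVal (σ.2 i))| ≤ K := by
    intro σ
    rw [abs_mul, abs_of_nonneg hα]
    exact mul_le_mul_of_nonneg_left (aux_coupling n ε σ) hα
  have hR : Real.exp (-K) * (Z * Z) ≤ ∑ σ : TwoConf n, Real.exp (-dilH n α β ε σ) := by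
    rw [hZ, Finset.sum_mul_sum, Fintype.sum_prod_type, Finset.mul_sum]
    refine Finset.sum_le_sum fun τ _ => ?_
    rw [Finset.mul_sum]
    refine Finset.sum_le_sum fun τ' _ => ?_
    rw [aux_weight, mul_comm]
    apply mul_le_mul_of_nonneg_left _ (mul_pos (hWpos _) (hWpos _)).le
    exact Real.exp_le_exp.2 (neg_le_of_abs_le (habs (τ, τ')))
  have hN : (∑ σ : TwoConf n, if (mag1 n σ, mag2 n σ) ∈ {x : ℝ × ℝ | ¬ memTyp mp κ (2 * n) x}
      then Real.exp (-dilH n α β ε σ) else 0) ≤ Real.exp K * (b * Z + Z * b) := by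
    rw [hZ, hbdef, Finset.sum_mul_sum, Finset.sum_mul_sum, Fintype.sum_prod_type,
      ← Finset.sum_add_distrib, Finset.mul_sum]
    refine Finset.sum_le_sum fun τ _ => ?_
    rw [← Finset.sum_add_distrib, Finset.mul_sum]
    refine Finset.sum_le_sum fun τ' _ => ?_
    have hw : Real.exp (-dilH n α β ε (τ, τ')) ≤
        Real.exp K * (auxW (β / 2) n τ * auxW (β / 2) n τ') := by
      rw [aux_weight, mul_comm]
      apply mul_le_mul_of_nonneg_right _ (mul_pos (hWpos _) (hWpos _)).le
      exact Real.exp_le_exp.2 (le_of_abs_le (habs (τ, τ')))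
    have p1 := hWpos τ
    have p2 := hWpos τ'
    have hm : ∀ s : ℝ, 2 / (2 * n : ℝ) * s = s / n := by intro s; field_simp
    split_ifs with h1 h2 h3 h3
    · refine hw.trans (mul_le_mul_of_nonneg_left ?_ (Real.exp_pos _).le)
      nlinarith
    · refine hw.trans (mul_le_mul_of_nonneg_left ?_ (Real.exp_pos _).le)
      nlinarith
    · refine hw.trans (mul_le_mul_of_nonneg_left ?_ (Real.exp_pos _).le)
      nlinarith
    · exfalso
      have := aux_not_typ mp κ (2 * n) _ h1
      simp only [mag1, mag2, hm] at this
      rcases this with h | h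
      · exact h2 h
      · exact h3 h
    all_goals positivity
  refine le_trans (le_of_eq (Finset.sum_congr rfl fun σ _ => by congr)) (hN.trans ?_)
  have hE : Real.exp (2 * K - c * (n * δ ^ 2)) =
      Real.exp K * Real.exp K * Real.exp (-(c * (n * δ ^ 2))) := by
    rw [← Real.exp_add, ← Real.exp_add]; congr 1; ring
  have hKK : Real.exp K * Real.exp (-K) = 1 := by rw [← Real.exp_add]; simp
  calc Real.exp K * (b * Z + Z * b) = 2 * Real.exp K * Z * b := by ring
    _ ≤ 2 * Real.exp K * Z * ((n + 1) * (Real.exp (-(c * (n * δ ^ 2))) * Z)) := by gcongr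
    _ = 2 * (n + 1) * Real.exp K * Real.exp (-(c * (n * δ ^ 2))) * (Z * Z) *
          (Real.exp K * Real.exp (-K)) := by rw [hKK]; ring
    _ = 2 * (n + 1) * Real.exp (2 * K - c * (n * δ ^ 2)) * (Real.exp (-K) * (Z * Z)) := by
        rw [hE]; ring
    _ ≤ _ := by gcongr

/-! ### Asymptotics -/

lemma aux_asymp (c ρ κ d : ℝ) (hc : 0 < c) (hκ : κ < 1 / 2) (hd : 2 * κ < ρ - d) :
    Tendsto (fun n : ℕ => 2 * ((n : ℝ) + 1) * Real.exp (2 * (n * ((2 * n : ℕ) : ℝ) ^ (d - ρ))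
      - c * (n * (((2 * n : ℕ) : ℝ) ^ (-κ)) ^ 2))) atTop (nhds 0) := by
  -- real variable version with `x = 2n`
  have hmain : Tendsto (fun x : ℝ => (x + 2) * Real.exp (x * x ^ (d - ρ)
      - c / 2 * (x * (x ^ (-κ)) ^ 2))) atTop (nhds 0) := by
    set a := 1 - 2 * κ with ha
    have ha0 : 0 < a := by linarith
    have hlog : ∀ᶠ x : ℝ in atTop, Real.log x ≤ c / 16 * x ^ a := by
      have := (isLittleO_log_rpow_atTop ha0).bound (show 0 < c / 16 by positivity)
      filter_upwards [this, eventually_gt_atTop 1] with x hx hx1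
      rw [Real.norm_of_nonneg (Real.log_nonneg hx1.le),
        Real.norm_of_nonneg (by positivity)] at hx
      exact hx
    have hsmall : ∀ᶠ x : ℝ in atTop, x ^ (-(ρ - d - 2 * κ)) < c / 4 :=
      (tendsto_rpow_neg_atTop (show 0 < ρ - d - 2 * κ by linarith)).eventually_lt_const
        (by positivity)
    have hlim : Tendsto (fun x : ℝ => 2 * x⁻¹) atTop (nhds 0) := by
      simpa using (tendsto_inv_atTop_zero (𝕜 := ℝ)).const_mul 2
    refine squeeze_zero' ?_ ?_ hlim
    · filter_upwards [eventually_gt_atTop 0] with x hx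
      positivity
    · filter_upwards [hlog, hsmall, eventually_gt_atTop 2] with x h1 h2 hx
      have hx0 : 0 < x := by linarith
      have e1 : x * (x ^ (-κ)) ^ 2 = x ^ a := by
        rw [← Real.rpow_natCast, ← Real.rpow_mul hx0.le]
        nth_rewrite 1 [← Real.rpow_one x]
        rw [← Real.rpow_add hx0]
        congr 1
        rw [ha]; push_cast; ring
      have e2 : x * x ^ (d - ρ) = x ^ a * x ^ (-(ρ - d - 2 * κ)) := by
        rw [← Real.rpow_add hx0]
        nth_rewrite 1 [← Real.rpow_one x]
        rw [← Real.rpow_add hx0]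
        congr 1
        rw [ha]; ring
      rw [e1, e2]
      have hxa : 0 < x ^ a := by positivity
      have h3 : x ^ a * x ^ (-(ρ - d - 2 * κ)) - c / 2 * x ^ a ≤ -(2 * Real.log x) := by
        nlinarith
      calc (x + 2) * Real.exp (x ^ a * x ^ (-(ρ - d - 2 * κ)) - c / 2 * x ^ a)
          ≤ (x + x) * Real.exp (-(2 * Real.log x)) := by gcongr
        _ = 2 * x⁻¹ := by
          rw [two_mul (Real.log x), Real.exp_neg, Real.exp_add, Real.exp_log hx0]
          field_simp
          ring
  have hcast : Tendsto (fun n : ℕ => ((2 * n : ℕ) : ℝ)) atTop atTop :=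
    tendsto_natCast_atTop_atTop.comp (tendsto_id.const_mul_atTop' (by norm_num))
  refine (hmain.comp hcast).congr fun n => ?_
  simp only [Function.comp]
  have e1 : ((2 * n : ℕ) : ℝ) + 2 = 2 * ((n : ℝ) + 1) := by push_cast; ring
  rw [e1]
  congr 2
  generalize ((2 * n : ℕ) : ℝ) ^ (d - ρ) = u
  generalize ((2 * n : ℕ) : ℝ) ^ (-κ) = v
  push_cast
  ring

/-- Proposition 4.1(1): for `β > 2`, `α_N p(N) = N^{−ρ}` with `ρ > 0`, `2κ < ρ`,
`0 < κ < 1/2` and `N p(N) → ∞`, the quenched Gibbs measure of the complement of the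
typical set vanishes with `ε`-probability `1 − o(1)`: for every `η > 0`, the
`P`-probability that `μ^ε_{N,α_N,β}((m₁,m₂) ∉ A_κ^N) > η` tends to `0` as `N → ∞`
through even integers. -/
theorem diluted_concentration_in_probability (β ρ κ : ℝ) (hβ : 2 < β) (hρ : 0 < ρ)
    (hκ0 : 0 < κ) (hκhalf : κ < 1 / 2) (hκρ : 2 * κ < ρ)
    (mp : ℝ) (hfix : mp = Real.tanh (β / 2 * mp))
    (hmax : ∀ z : ℝ, z = Real.tanh (β / 2 * z) → z ≤ mp)
    (α p : ℕ → ℝ) (hp : ∀ N, p N ∈ Set.Ioc (0 : ℝ) 1)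
    (hαp : ∀ N : ℕ, 1 ≤ N → α N * p N = (N : ℝ) ^ (-ρ))
    (hNp : Tendsto (fun N : ℕ => (N : ℝ) * p N) atTop atTop) :
    ∀ η : ℝ, 0 < η →
      Tendsto
        (fun n : ℕ =>
          bernProb n (p (2 * n))
            {ε : Fin n → Bool |
              ENNReal.ofReal η <
                dilMagDist n (α (2 * n)) β ε {x : ℝ × ℝ | ¬ memTyp mp κ (2 * n) x}})
        atTop (nhds 0) := by
  intro η hη
  have hγ : 1 < β / 2 := by linarith
  have hmp : 0 < mp := aux_mp_pos (β / 2) hγ mp hmax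
  obtain ⟨c, hc, hb⟩ := auxPhi_bound (β / 2) mp hγ hmp hfix
  set d := (ρ - 2 * κ) / 2 with hd
  have hd0 : 0 < d := by rw [hd]; linarith
  have hasy := aux_asymp c ρ κ d hc hκhalf (by rw [hd]; linarith)
  have hcast : Tendsto (fun n : ℕ => ((2 * n : ℕ) : ℝ)) atTop atTop :=
    tendsto_natCast_atTop_atTop.comp (tendsto_id.const_mul_atTop' (by norm_num))
  have hlim : Tendsto (fun n : ℕ => ((2 * n : ℕ) : ℝ) ^ (-d)) atTop (nhds 0) :=
    (tendsto_rpow_neg_atTop hd0).comp hcast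
  refine squeeze_zero' ?_ ?_ hlim
  · exact Eventually.of_forall fun n => aux_bern_nonneg n _ (hp _).1.le (hp _).2 _
  · filter_upwards [hasy.eventually_lt_const hη, eventually_gt_atTop 0] with n hsm hn
    have hn' : (0 : ℝ) < n := by exact_mod_cast hn
    have hN : (0 : ℝ) < ((2 * n : ℕ) : ℝ) := by exact_mod_cast (by omega : 0 < 2 * n)
    have hp0 := (hp (2 * n)).1
    have hap := hαp (2 * n) (by omega)
    have hα : 0 ≤ α (2 * n) := by
      have h : 0 < α (2 * n) * p (2 * n) := by rw [hap]; positivity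
      exact (pos_of_mul_pos_left h hp0.le).le
    have hNd : 0 < ((2 * n : ℕ) : ℝ) ^ d := by positivity
    refine (aux_bern_markov n (p (2 * n)) (n * p (2 * n) * ((2 * n : ℕ) : ℝ) ^ d) hp0.le
      (hp _).2 (by positivity) _ ?_).trans ?_
    · intro ε hε
      by_contra hlt
      push Not at hlt
      have hε' : ENNReal.ofReal η <
        dilMagDist n (α (2 * n)) β ε {x : ℝ × ℝ | ¬ memTyp mp κ (2 * n) x} := hε
      have h1 := aux_gibbs n hn (α (2 * n)) β mp κ c hα (by linarith) hc hb ε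
      refine absurd (hε'.trans_le h1) (not_lt.2 (ENNReal.ofReal_le_ofReal (le_trans ?_ hsm.le)))
      have hK : α (2 * n) * auxE n ε ≤ n * ((2 * n : ℕ) : ℝ) ^ (d - ρ) := by
        calc α (2 * n) * auxE n ε
            ≤ α (2 * n) * (n * p (2 * n) * ((2 * n : ℕ) : ℝ) ^ d) :=
              mul_le_mul_of_nonneg_left hlt.le hα
          _ = n * (((2 * n : ℕ) : ℝ) ^ d * (α (2 * n) * p (2 * n))) := by ring
          _ = n * ((2 * n : ℕ) : ℝ) ^ (d - ρ) := by
              rw [hap, ← Real.rpow_add hN, sub_eq_add_neg]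
      gcongr
    · apply le_of_eq
      rw [Real.rpow_neg hN.le]
      field_simp

end
end

section
/- Let β > 2, ρ > 0, 0 < κ < 1/2 with 2κ < ρ, and assume α_N·p(N) = N^{−ρ} where p(N) ∈ (0,1]. If there exists δ ∈ (0,1) such that ∑_{N=1}^∞ exp(−(δ²/6)·N·p(N)) < ∞, then for P-almost every realization of ε, μ^ε_{N,α_N,β}((m₁(σ), m₂(σ)) ∉ A_κ^N) → 0 as N → ∞ through even integers. -/
open MeasureTheory Filter

noncomputable section

/-- The law of the i.i.d. Bernoulli(q) dilution variables `(ε_i)_{i ∈ B₁}`. -/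
def bernMeasure (n : ℕ) (q : ℝ) : Measure (Fin n → Bool) :=
  ∑ ε : Fin n → Bool,
    ENNReal.ofReal (∏ i, if ε i then q else 1 - q) • Measure.dirac ε

lemma hasDerivAt_tanhMul (γ x : ℝ) :
    HasDerivAt (fun x => Real.tanh (γ * x) - x) (γ / Real.cosh (γ * x) ^ 2 - 1) x := by
  have hl : HasDerivAt (fun x : ℝ => γ * x) γ x := by
    simpa using (hasDerivAt_id x).const_mul γ
  have h1 : HasDerivAt (fun x => Real.sinh (γ * x)) (Real.cosh (γ * x) * γ) x :=
    (Real.hasDerivAt_sinh _).comp x hl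
  have h2 : HasDerivAt (fun x => Real.cosh (γ * x)) (Real.sinh (γ * x) * γ) x :=
    (Real.hasDerivAt_cosh _).comp x hl
  have hc : Real.cosh (γ * x) ≠ 0 := (Real.cosh_pos _).ne'
  have h3 := (h1.div h2 hc).sub (hasDerivAt_id x)
  have e : (fun x => Real.tanh (γ * x) - x)
      = (fun x => Real.sinh (γ * x)) / (fun x => Real.cosh (γ * x)) - id := by
    funext y; simp [Real.tanh_eq_sinh_div_cosh]
  rw [e]
  refine h3.congr_deriv ?_
  have := Real.cosh_sq (γ * x)
  congr 1
  congr 1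
  linear_combination γ * this

lemma tanhMul_strictConcave (γ : ℝ) (hγ : 0 < γ) :
    StrictConcaveOn ℝ (Set.Ici 0) (fun x => Real.tanh (γ * x) - x) := by
  apply StrictAntiOn.strictConcaveOn_of_deriv (convex_Ici 0)
  · exact fun x _ => (hasDerivAt_tanhMul γ x).continuousAt.continuousWithinAt
  · intro x hx y hy hxy
    simp only [interior_Ici, Set.mem_Ioi] at hx hy
    rw [(hasDerivAt_tanhMul γ x).deriv, (hasDerivAt_tanhMul γ y).deriv]
    have h1 : Real.cosh (γ * x) < Real.cosh (γ * y) := by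
      rw [Real.cosh_lt_cosh, abs_of_pos (by positivity), abs_of_pos (by positivity)]
      gcongr
    have := Real.cosh_pos (γ * x)
    gcongr

lemma mp_pos (γ mp : ℝ) (hγ : 1 < γ)
    (hmax : ∀ z : ℝ, z = Real.tanh (γ * z) → z ≤ mp) : 0 < mp := by
  have hd := hasDerivAt_tanhMul γ 0
  have hpos : 0 < γ / Real.cosh (γ * 0) ^ 2 - 1 := by simp; linarith
  have ⟨x, hx0, hx1, hx⟩ : ∃ x, 0 < x ∧ x < 1 ∧ 0 < Real.tanh (γ * x) - x := by
    have h := hd.tendsto_slope_zero_right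
    have h2 := h.eventually (lt_mem_nhds hpos)
    have h3 : ∀ᶠ t : ℝ in nhdsWithin 0 (Set.Ioi 0), t ∈ Set.Ioo (0:ℝ) 1 :=
      Ioo_mem_nhdsGT one_pos
    obtain ⟨t, h4, h5⟩ := (h2.and h3).exists
    refine ⟨t, h5.1, h5.2, ?_⟩
    simp only [zero_add, mul_zero, Real.tanh_zero, sub_zero, smul_eq_mul] at h4
    exact (pos_iff_pos_of_mul_pos h4).1 (inv_pos.2 h5.1)
  have hcont : ContinuousOn (fun x => Real.tanh (γ * x) - x) (Set.Icc x 1) :=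
    fun x _ => (hasDerivAt_tanhMul γ x).continuousAt.continuousWithinAt
  have h1 : Real.tanh (γ * 1) - 1 < 0 := by linarith [Real.tanh_lt_one (γ * 1)]
  obtain ⟨z, hz, hz0⟩ := intermediate_value_Icc' hx1.le hcont ⟨h1.le, hx.le⟩
  have := hmax z (by simp only at hz0; linarith)
  linarith [hz.1]

/-- the Curie–Weiss rate functional -/
def cwG (γ x : ℝ) : ℝ := Real.log (2 * Real.cosh (γ * x)) - γ * x ^ 2 / 2

lemma hasDerivAt_cwG (γ x : ℝ) :
    HasDerivAt (cwG γ) (γ * (Real.tanh (γ * x) - x)) x := by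
  have hl : HasDerivAt (fun x : ℝ => γ * x) γ x := by
    simpa using (hasDerivAt_id x).const_mul γ
  have h2 : HasDerivAt (fun x => Real.cosh (γ * x)) (Real.sinh (γ * x) * γ) x :=
    (Real.hasDerivAt_cosh _).comp x hl
  have hc : Real.cosh (γ * x) ≠ 0 := (Real.cosh_pos _).ne'
  have h3 := ((h2.const_mul 2).log (by positivity)).sub
    ((((hasDerivAt_id x).pow 2).const_mul γ).div_const 2)
  refine h3.congr_deriv ?_
  rw [Real.tanh_eq_sinh_div_cosh]
  simp
  field_simp

lemma cwG_quad (γ mp : ℝ) (hγ : 1 < γ) (hfix : mp = Real.tanh (γ * mp))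
    (hmax : ∀ z : ℝ, z = Real.tanh (γ * z) → z ≤ mp) :
    ∃ c > 0, ∀ x : ℝ, 0 ≤ x → cwG γ x ≤ cwG γ mp - c * (x - mp) ^ 2 := by
  have hmp := mp_pos γ mp hγ hmax
  have hγ0 : 0 < γ := by linarith
  set f : ℝ → ℝ := fun x => Real.tanh (γ * x) - x with hf
  have hconc : StrictConcaveOn ℝ (Set.Ici 0) f := tanhMul_strictConcave γ hγ0
  have f0 : f 0 = 0 := by simp [hf]
  have fm : f mp = 0 := by simp only [hf]; linarith
  have fh : 0 < f (mp / 2) := by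
    have := hconc.slope_anti_adjacent (x := 0) (y := mp / 2) (z := mp)
      (by simp) (by simpa using hmp.le) (by linarith) (by linarith)
    rw [f0, fm, div_lt_div_iff₀ (by linarith) (by linarith)] at this
    nlinarith
  set c := f (mp / 2) / (mp / 2) with hc
  have hc0 : 0 < c := by positivity
  have fhc : f (mp / 2) = c * (mp / 2) := by rw [hc]; field_simp
  -- chord bounds
  have hA : ∀ x, mp / 2 ≤ x → x ≤ mp → c * (mp - x) ≤ f x := by
    intro x h1 h2
    rcases h1.eq_or_lt with h1 | h1
    · rw [← h1, fhc]; apply le_of_eq; ring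
    rcases h2.eq_or_lt with h2 | h2
    · rw [h2, fm]; simp
    have := hconc.slope_anti_adjacent (x := mp / 2) (y := x) (z := mp)
      (by simp; linarith) (by simpa using hmp.le) h1 h2
    rw [fm, fhc, div_lt_div_iff₀ (by linarith) (by linarith)] at this
    nlinarith
  have hB : ∀ x, mp ≤ x → f x ≤ - c * (x - mp) := by
    intro x h1
    rcases h1.eq_or_lt with h1 | h1
    · rw [← h1, fm]; simp
    have := hconc.slope_anti_adjacent (x := mp / 2) (y := mp) (z := x)
      (by simp; linarith) (by simp; linarith) (by linarith) h1
    rw [fm, fhc, div_lt_div_iff₀ (by linarith) (by linarith)] at this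
    nlinarith
  have hC : ∀ x, 0 ≤ x → x ≤ mp / 2 → 0 ≤ f x := by
    intro x h1 h2
    rcases h1.eq_or_lt with h1 | h1
    · rw [← h1, f0]
    have := hconc.slope_anti_adjacent (x := 0) (y := x) (z := mp)
      (by simp) (by simpa using hmp.le) h1 (by linarith)
    rw [fm, f0, div_lt_div_iff₀ (by linarith) (by linarith)] at this
    nlinarith
  set K : ℝ → ℝ := fun x => cwG γ x + γ * c / 2 * (x - mp) ^ 2 with hK
  have hKd : ∀ x, HasDerivAt K (γ * (f x + c * (x - mp))) x := by
    intro x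
    have := (hasDerivAt_cwG γ x).add
      (((((hasDerivAt_id x).sub_const mp)).pow 2).const_mul (γ * c / 2))
    refine this.congr_deriv ?_
    simp [hf]; ring
  have hK1 : ∀ x, mp / 2 ≤ x → K x ≤ K mp := by
    intro x hx
    rcases le_total x mp with h | h
    · have : MonotoneOn K (Set.Icc (mp / 2) mp) := by
        apply monotoneOn_of_deriv_nonneg (convex_Icc _ _)
        · exact fun x _ => (hKd x).continuousAt.continuousWithinAt
        · exact fun x _ => (hKd x).differentiableAt.differentiableWithinAt
        · intro y hy
          rw [interior_Icc] at hy
          rw [(hKd y).deriv]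
          have := hA y hy.1.le hy.2.le
          apply mul_nonneg hγ0.le; linarith
      exact this ⟨hx, h⟩ ⟨by linarith, le_rfl⟩ h
    · have : AntitoneOn K (Set.Ici mp) := by
        apply antitoneOn_of_deriv_nonpos (convex_Ici _)
        · exact fun x _ => (hKd x).continuousAt.continuousWithinAt
        · exact fun x _ => (hKd x).differentiableAt.differentiableWithinAt
        · intro y hy
          rw [interior_Ici] at hy
          rw [(hKd y).deriv]
          have := hB y (le_of_lt hy)
          apply mul_nonpos_of_nonneg_of_nonpos hγ0.le; linarith
      exact this (Set.mem_Ici.2 le_rfl) h h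
  have hG : ∀ x, 0 ≤ x → x ≤ mp / 2 → cwG γ x ≤ cwG γ (mp / 2) := by
    intro x h1 h2
    have : MonotoneOn (cwG γ) (Set.Icc 0 (mp / 2)) := by
      apply monotoneOn_of_deriv_nonneg (convex_Icc _ _)
      · exact fun x _ => (hasDerivAt_cwG γ x).continuousAt.continuousWithinAt
      · exact fun x _ => (hasDerivAt_cwG γ x).differentiableAt.differentiableWithinAt
      · intro y hy
        rw [interior_Icc] at hy
        rw [(hasDerivAt_cwG γ y).deriv]
        exact mul_nonneg hγ0.le (hC y hy.1.le hy.2.le)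
    exact this ⟨h1, h2⟩ ⟨by linarith, le_rfl⟩ h2
  have hKm : K mp = cwG γ mp := by simp [hK]
  refine ⟨γ * c / 8, by positivity, fun x hx => ?_⟩
  have hgc : 0 < γ * c := by positivity
  rcases le_total x (mp / 2) with h | h
  · have h1 := hG x hx h
    have h2 := hK1 (mp / 2) le_rfl
    rw [hKm] at h2
    simp only [hK] at h2
    have h3 : (x - mp) ^ 2 ≤ mp ^ 2 := by nlinarith
    nlinarith
  · have h2 := hK1 x h
    rw [hKm] at h2
    simp only [hK] at h2
    nlinarith [mul_nonneg hgc.le (sq_nonneg (x - mp))]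

lemma cwG_even (γ x : ℝ) : cwG γ |x| = cwG γ x := by
  unfold cwG
  rcases abs_choice x with h | h <;> rw [h]
  simp [Real.cosh_neg]

lemma cwG_bad (γ mp : ℝ) (hγ : 1 < γ) (hfix : mp = Real.tanh (γ * mp))
    (hmax : ∀ z : ℝ, z = Real.tanh (γ * z) → z ≤ mp) :
    ∃ c > 0, ∀ x r : ℝ, 0 ≤ r → r ≤ |x - mp| → r ≤ |x - -mp| →
      cwG γ x ≤ cwG γ mp - c * r ^ 2 := by
  obtain ⟨c, hc, h⟩ := cwG_quad γ mp hγ hfix hmax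
  refine ⟨c, hc, fun x r hr h1 h2 => ?_⟩
  have := h |x| (abs_nonneg x)
  rw [cwG_even] at this
  have h3 : r ≤ |(|x| - mp)| := by
    rcases abs_choice x with h | h <;> rw [h]
    · exact h1
    · rwa [← abs_neg, show -(-x - mp) = x - -mp by ring]
  have h4 : r ^ 2 ≤ (|x| - mp) ^ 2 := by
    rw [← sq_abs (|x| - mp)]; gcongr
  nlinarith

/-- magnetization of one block -/
def cwm (n : ℕ) (τ : Fin n → Bool) : ℝ := (2 / (2 * n : ℝ)) * ∑ i, spinVal (τ i)

/-- Curie–Weiss weight of one block -/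
def cwW (γ : ℝ) (n : ℕ) (τ : Fin n → Bool) : ℝ := Real.exp (n * (γ * cwm n τ ^ 2 / 2))

lemma n_mul_cwm (n : ℕ) (hn : 0 < n) (τ : Fin n → Bool) :
    (n : ℝ) * cwm n τ = ∑ i, spinVal (τ i) := by
  have : (n : ℝ) ≠ 0 := by positivity
  unfold cwm
  field_simp

lemma sum_exp_spin (n : ℕ) (h : ℝ) :
    ∑ τ : Fin n → Bool, Real.exp (h * ∑ i, spinVal (τ i)) = (2 * Real.cosh h) ^ n := by
  have h1 : ∀ τ : Fin n → Bool, Real.exp (h * ∑ i, spinVal (τ i))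
      = ∏ i, Real.exp (h * spinVal (τ i)) := by
    intro τ; rw [Finset.mul_sum, Real.exp_sum]
  simp_rw [h1]
  have := Finset.sum_prod_piFinset (ι := Fin n) (Finset.univ : Finset Bool)
    (fun _ b => Real.exp (h * spinVal b))
  rw [Fintype.piFinset_univ] at this
  rw [this]
  simp [spinVal, Real.cosh_eq]
  congr 1; ring

lemma sum_tilt (γ x : ℝ) (n : ℕ) (hn : 0 < n) :
    ∑ τ : Fin n → Bool, Real.exp (n * (γ * x * cwm n τ - γ * x ^ 2 / 2))
      = Real.exp (n * cwG γ x) := by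
  have h1 : ∀ τ : Fin n → Bool, Real.exp (n * (γ * x * cwm n τ - γ * x ^ 2 / 2))
      = Real.exp (-(n * (γ * x ^ 2 / 2))) * Real.exp (γ * x * ∑ i, spinVal (τ i)) := by
    intro τ
    rw [← n_mul_cwm n hn, ← Real.exp_add]; congr 1; ring
  simp_rw [h1]
  rw [← Finset.mul_sum, sum_exp_spin]
  unfold cwG
  rw [mul_sub, sub_eq_neg_add, Real.exp_add, Real.exp_nat_mul, Real.exp_log]
  have := Real.cosh_pos (γ * x)
  positivity

lemma cw_Z_lower (γ x : ℝ) (hγ : 0 < γ) (n : ℕ) (hn : 0 < n) :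
    Real.exp (n * cwG γ x) ≤ ∑ τ : Fin n → Bool, cwW γ n τ := by
  rw [← sum_tilt γ x n hn]
  apply Finset.sum_le_sum
  intro τ _
  unfold cwW
  gcongr
  nlinarith [mul_nonneg hγ.le (sq_nonneg (x - cwm n τ))]

lemma cwm_mem (n : ℕ) (τ : Fin n → Bool) :
    cwm n τ ∈ (Finset.range (n + 1)).image (fun k : ℕ => (2 / (2 * n : ℝ)) * (2 * (k : ℝ) - n)) := by
  rw [Finset.mem_image]
  refine ⟨(Finset.univ.filter (fun i => τ i = true)).card, ?_, ?_⟩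
  · rw [Finset.mem_range]
    have := Finset.card_filter_le (Finset.univ : Finset (Fin n)) (fun i => τ i = true)
    simp at this
    omega
  · unfold cwm
    congr 1
    have : ∀ i, spinVal (τ i) = 2 * (if τ i = true then (1:ℝ) else 0) - 1 := by
      intro i; unfold spinVal; split_ifs <;> norm_num
    simp_rw [this]
    rw [Finset.sum_sub_distrib, ← Finset.mul_sum, Finset.sum_boole]
    simp

open Classical in
lemma cw_bad_upper (γ g : ℝ) (n : ℕ) (hn : 0 < n) (S : Set ℝ)
    (hS : ∀ x ∈ S, cwG γ x ≤ g) :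
    ∑ τ : Fin n → Bool, (if cwm n τ ∈ S then cwW γ n τ else 0)
      ≤ (n + 1) * Real.exp (n * g) := by
  set V := (Finset.range (n + 1)).image
    (fun k : ℕ => (2 / (2 * n : ℝ)) * (2 * (k : ℝ) - n)) with hV
  have hVc : (V.card : ℝ) ≤ n + 1 := by
    have := Finset.card_image_le (s := Finset.range (n + 1))
      (f := fun k : ℕ => (2 / (2 * n : ℝ)) * (2 * (k : ℝ) - n))
    rw [Finset.card_range] at this
    have h2 : V.card ≤ n + 1 := this
    exact_mod_cast h2
  calc ∑ τ : Fin n → Bool, (if cwm n τ ∈ S then cwW γ n τ else 0)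
      ≤ ∑ τ : Fin n → Bool, ∑ x ∈ V.filter (· ∈ S),
          Real.exp (n * (γ * x * cwm n τ - γ * x ^ 2 / 2)) := by
        apply Finset.sum_le_sum
        intro τ _
        split_ifs with h
        · have hm : cwm n τ ∈ V.filter (· ∈ S) := Finset.mem_filter.2 ⟨cwm_mem n τ, h⟩
          refine le_trans (le_of_eq ?_) (Finset.single_le_sum
            (f := fun x => Real.exp (n * (γ * x * cwm n τ - γ * x ^ 2 / 2)))
            (fun x _ => (Real.exp_pos _).le) hm)
          unfold cwW; congr 1; ring
        · exact Finset.sum_nonneg (fun x _ => (Real.exp_pos _).le)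
    _ = ∑ x ∈ V.filter (· ∈ S), Real.exp (n * cwG γ x) := by
        rw [Finset.sum_comm]
        exact Finset.sum_congr rfl (fun x _ => sum_tilt γ x n hn)
    _ ≤ ∑ x ∈ V.filter (· ∈ S), Real.exp (n * g) := by
        apply Finset.sum_le_sum
        intro x hx
        have := hS x (Finset.mem_filter.1 hx).2
        gcongr
    _ ≤ (n + 1) * Real.exp (n * g) := by
        rw [Finset.sum_const, nsmul_eq_mul]
        gcongr
        refine le_trans ?_ hVc
        exact_mod_cast Finset.card_filter_le _ _

lemma dilH_eq (n : ℕ) (hn : 0 < n) (α β : ℝ) (ε : Fin n → Bool) (σ : TwoConf n) :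
    -dilH n α β ε σ = n * (β / 2 * cwm n σ.1 ^ 2 / 2) + n * (β / 2 * cwm n σ.2 ^ 2 / 2)
      + α * ∑ i, (if ε i then (1 : ℝ) else 0) * (spinVal (σ.1 i) * spinVal (σ.2 i)) := by
  unfold dilH
  simp_rw [← Finset.mul_sum, ← Finset.sum_mul]
  rw [← n_mul_cwm n hn, ← n_mul_cwm n hn]
  have : (n : ℝ) ≠ 0 := by positivity
  field_simp
  ring

lemma inter_bound (n : ℕ) (α : ℝ) (hα : 0 ≤ α) (ε : Fin n → Bool) (σ : TwoConf n) :
    |α * ∑ i, (if ε i then (1 : ℝ) else 0) * (spinVal (σ.1 i) * spinVal (σ.2 i))|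
      ≤ α * ∑ i, (if ε i then (1 : ℝ) else 0) := by
  rw [abs_mul, abs_of_nonneg hα]
  gcongr
  refine (Finset.abs_sum_le_sum_abs _ _).trans ?_
  apply Finset.sum_le_sum
  intro i _
  unfold spinVal
  split_ifs <;> norm_num

open Classical in
lemma dilMagDist_bad (n : ℕ) (hn : 0 < n) (α β c r mp D : ℝ) (hβ : 0 < β) (hα : 0 ≤ α)
    (ε : Fin n → Bool) (hD : α * ∑ i, (if ε i then (1 : ℝ) else 0) ≤ D)
    (κ : ℝ) (hr : r = ((2 * n : ℕ) : ℝ) ^ (-κ)) 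
    (hc : ∀ x r : ℝ, 0 ≤ r → r ≤ |x - mp| → r ≤ |x - -mp| →
      cwG (β / 2) x ≤ cwG (β / 2) mp - c * r ^ 2) :
    dilMagDist n α β ε {x : ℝ × ℝ | ¬ memTyp mp κ (2 * n) x}
      ≤ ENNReal.ofReal (2 * (n + 1) * Real.exp (2 * D - n * (c * r ^ 2))) := by
  have hr0 : 0 ≤ r := by rw [hr]; positivity
  set A := {x : ℝ × ℝ | ¬ memTyp mp κ (2 * n) x} with hA
  set S : Set ℝ := {x | r ≤ |x - mp| ∧ r ≤ |x - -mp|} with hS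
  have hAS : ∀ x : ℝ × ℝ, x ∈ A → x.1 ∈ S ∨ x.2 ∈ S := by
    intro x hx
    by_contra! h
    apply hx
    have key : ∀ y : ℝ, y ∉ S → ∃ s : Bool, |y - (if s then mp else -mp)| < r := by
      intro y hy
      simp only [hS, Set.mem_ofPred_eq, not_and_or, not_le] at hy
      rcases hy with hy | hy
      · exact ⟨true, by simpa using hy⟩
      · exact ⟨false, by simpa using hy⟩
    obtain ⟨s₁, h1⟩ := key _ h.1
    obtain ⟨s₂, h2⟩ := key _ h.2
    rw [hr] at h1 h2
    exact ⟨s₁, s₂, h1, h2⟩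
  set w : TwoConf n → ℝ := fun σ => Real.exp (-dilH n α β ε σ) with hw
  set g := cwW (β / 2) n with hg
  have hg0 : ∀ τ, 0 < g τ := fun τ => Real.exp_pos _
  set Z := ∑ τ, g τ with hZ
  set B := ∑ τ : Fin n → Bool, (if cwm n τ ∈ S then g τ else 0) with hB
  have hwu : ∀ σ, w σ ≤ Real.exp D * (g σ.1 * g σ.2) := by
    intro σ
    simp only [hw, hg, cwW]
    rw [dilH_eq n hn, ← Real.exp_add, ← Real.exp_add]
    have := (abs_le.1 (inter_bound n α hα ε σ)).2
    apply Real.exp_le_exp.2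
    linarith
  have hwl : ∀ σ, Real.exp (-D) * (g σ.1 * g σ.2) ≤ w σ := by
    intro σ
    simp only [hw, hg, cwW]
    rw [dilH_eq n hn, ← Real.exp_add, ← Real.exp_add]
    have := (abs_le.1 (inter_bound n α hα ε σ)).1
    apply Real.exp_le_exp.2
    linarith
  have hZw : Real.exp (-D) * (Z * Z) ≤ ∑ σ, w σ := by
    rw [hZ, Finset.sum_mul_sum, ← Finset.sum_product', Finset.mul_sum]
    exact Finset.sum_le_sum (fun σ _ => hwl σ)
  have hBw : ∑ σ : TwoConf n, (if (mag1 n σ, mag2 n σ) ∈ A then w σ else 0)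
      ≤ Real.exp D * (2 * (Z * B)) := by
    have h1 : ∀ σ : TwoConf n, (if (mag1 n σ, mag2 n σ) ∈ A then w σ else 0)
        ≤ Real.exp D * ((if cwm n σ.1 ∈ S then g σ.1 else 0) * g σ.2
          + g σ.1 * (if cwm n σ.2 ∈ S then g σ.2 else 0)) := by
      intro σ
      have p1 := hg0 σ.1
      have p2 := hg0 σ.2
      have pe := Real.exp_pos D
      have hu := hwu σ
      by_cases h : (mag1 n σ, mag2 n σ) ∈ A
      · rw [if_pos h]
        refine hu.trans ?_
        gcongr
        rcases hAS _ h with h' | h'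
        · have h'' : cwm n σ.1 ∈ S := h'
          rw [if_pos h'']
          split_ifs <;> nlinarith [mul_pos p1 p2]
        · have h'' : cwm n σ.2 ∈ S := h'
          rw [if_pos h'']
          split_ifs <;> nlinarith [mul_pos p1 p2]
      · rw [if_neg h]
        split_ifs <;> positivity
    refine (Finset.sum_le_sum (fun σ _ => h1 σ)).trans (le_of_eq ?_)
    rw [← Finset.mul_sum, Finset.sum_add_distrib, two_mul]
    congr 2
    · rw [mul_comm, hZ, hB, Finset.sum_mul_sum, ← Finset.sum_product']
      rfl
    · rw [hZ, hB, Finset.sum_mul_sum, ← Finset.sum_product']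
      rfl
  have hBu : B ≤ (n + 1) * Real.exp (n * (cwG (β / 2) mp - c * r ^ 2)) := by
    convert cw_bad_upper (β / 2) _ n hn S (fun x hx => hc x r hr0 hx.1 hx.2)
  have hZl : Real.exp (n * cwG (β / 2) mp) ≤ Z :=
    cw_Z_lower (β / 2) mp (by linarith) n hn
  have hZ0 : 0 < Z := lt_of_lt_of_le (Real.exp_pos _) hZl
  have hW0 : 0 < ∑ σ, w σ := lt_of_lt_of_le (by positivity) hZw
  have hBZ : B ≤ (n + 1) * Real.exp (-(n * (c * r ^ 2))) * Z := by
    refine hBu.trans ?_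
    calc _ = (n + 1) * Real.exp (-(n * (c * r ^ 2))) * Real.exp (n * cwG (β / 2) mp) := by
          rw [mul_assoc, ← Real.exp_add]; congr 2; ring
      _ ≤ _ := by gcongr
  have hfin : (∑ σ, w σ)⁻¹ * ∑ σ : TwoConf n, (if (mag1 n σ, mag2 n σ) ∈ A then w σ else 0)
      ≤ 2 * (n + 1) * Real.exp (2 * D - n * (c * r ^ 2)) := by
    rw [inv_mul_le_iff₀ hW0]
    calc _ ≤ Real.exp D * (2 * (Z * B)) := hBw
      _ ≤ Real.exp D * (2 * (Z * ((n + 1) * Real.exp (-(n * (c * r ^ 2))) * Z))) := by gcongr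
      _ = (Real.exp (-D) * (Z * Z)) * (2 * (n + 1) * Real.exp (2 * D - n * (c * r ^ 2))) := by
          have : Real.exp (2 * D - n * (c * r ^ 2))
              = Real.exp D * Real.exp D * Real.exp (-(n * (c * r ^ 2))) := by
            rw [← Real.exp_add, ← Real.exp_add]; congr 1; ring
          rw [this]
          have h2 : Real.exp (-D) * Real.exp D = 1 := by rw [← Real.exp_add]; simp
          linear_combination (-2 * Z * Z * (n + 1) * Real.exp D * Real.exp (-(n * (c * r ^ 2)))) * h2
      _ ≤ _ := by gcongr
  refine le_trans (le_of_eq ?_) (ENNReal.ofReal_le_ofReal hfin)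
  have hAm : MeasurableSet A := by
    have : A = ⋂ s₁ : Bool, ⋂ s₂ : Bool, {x : ℝ × ℝ | ¬ (|x.1 - (if s₁ then mp else -mp)| < ((2 * n : ℕ) : ℝ) ^ (-κ) ∧
      |x.2 - (if s₂ then mp else -mp)| < ((2 * n : ℕ) : ℝ) ^ (-κ))} := by
      ext x; simp only [hA, memTyp, Set.mem_ofPred_eq, Set.mem_iInter, not_exists]
    rw [this]
    refine MeasurableSet.iInter fun s₁ => MeasurableSet.iInter fun s₂ => ?_
    have m1 : Measurable fun x : ℝ × ℝ => |x.1 - (if s₁ then mp else -mp)| :=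
      (measurable_fst.sub_const _).abs
    have m2 : Measurable fun x : ℝ × ℝ => |x.2 - (if s₂ then mp else -mp)| :=
      (measurable_snd.sub_const _).abs
    exact ((measurableSet_lt m1 measurable_const).inter
      (measurableSet_lt m2 measurable_const)).compl
  unfold dilMagDist
  rw [Measure.smul_apply, Measure.finsetSum_apply, smul_eq_mul,
    ENNReal.ofReal_mul (inv_nonneg.2 hW0.le), ENNReal.ofReal_inv_of_pos hW0,
    ENNReal.ofReal_sum_of_nonneg (fun σ _ => (Real.exp_pos _).le),
    ENNReal.ofReal_sum_of_nonneg (fun σ _ => by split_ifs <;> [exact (Real.exp_pos _).le; rfl])]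
  congr 1
  apply Finset.sum_congr rfl
  intro σ _
  rw [Measure.smul_apply, Measure.dirac_apply' _ hAm, smul_eq_mul]
  by_cases h : (mag1 n σ, mag2 n σ) ∈ A
  · simp [h, hw]
  · simp [h]

lemma bern_sum (n : ℕ) (q a : ℝ) :
    ∑ ε : Fin n → Bool, (∏ i, if ε i then q else 1 - q) *
        Real.exp (∑ i, (if ε i then (1 : ℝ) else 0) - a)
      = (q * Real.exp 1 + (1 - q)) ^ n * Real.exp (-a) := by
  have h1 : ∀ ε : Fin n → Bool, (∏ i, if ε i then q else 1 - q) *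
        Real.exp (∑ i, (if ε i then (1 : ℝ) else 0) - a)
      = (∏ i, (if ε i then q * Real.exp 1 else 1 - q)) * Real.exp (-a) := by
    intro ε
    rw [sub_eq_add_neg _ a, Real.exp_add, Real.exp_sum, ← mul_assoc, ← Finset.prod_mul_distrib]
    congr 1
    apply Finset.prod_congr rfl
    intro i _
    split_ifs <;> simp
  simp_rw [h1]
  rw [← Finset.sum_mul]
  have := Finset.sum_prod_piFinset (ι := Fin n) (Finset.univ : Finset Bool)
    (fun _ b => if b then q * Real.exp 1 else 1 - q)
  rw [Fintype.piFinset_univ] at this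
  rw [this]
  simp

lemma bern_univ (n : ℕ) (q : ℝ) (hq : q ∈ Set.Ioc (0 : ℝ) 1) :
    bernMeasure n q Set.univ = 1 := by
  unfold bernMeasure
  rw [Measure.finsetSum_apply]
  simp only [Measure.smul_apply, measure_univ, smul_eq_mul, mul_one]
  rw [← ENNReal.ofReal_sum_of_nonneg]
  · have := Finset.sum_prod_piFinset (ι := Fin n) (Finset.univ : Finset Bool)
      (fun _ b => if b then q else 1 - q)
    rw [Fintype.piFinset_univ] at this
    rw [this]
    simp
  · intro ε _
    apply Finset.prod_nonneg
    intro i _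
    split_ifs <;> linarith [hq.1, hq.2]

lemma bern_tail (n : ℕ) (q : ℝ) (hq : q ∈ Set.Ioc (0 : ℝ) 1) :
    bernMeasure n q {ε | 4 * (n * q) < ∑ i, (if ε i then (1 : ℝ) else 0)}
      ≤ ENNReal.ofReal (Real.exp (-(2 * n * q))) := by
  have hp : ∀ ε : Fin n → Bool, 0 ≤ ∏ i, if ε i then q else 1 - q := by
    intro ε
    apply Finset.prod_nonneg
    intro i _
    split_ifs <;> linarith [hq.1, hq.2]
  have hb : (q * Real.exp 1 + (1 - q)) ^ n * Real.exp (-(4 * (n * q)))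
      ≤ Real.exp (-(2 * n * q)) := by
    have he := Real.exp_one_lt_d9
    have h1 : q * Real.exp 1 + (1 - q) ≤ Real.exp (2 * q) := by
      have := Real.add_one_le_exp (2 * q)
      nlinarith [hq.1]
    have h0 : 0 ≤ q * Real.exp 1 + (1 - q) := by
      have := Real.exp_pos 1
      have := hq.1
      have : 0 ≤ 1 - q := by linarith [hq.2]
      positivity
    calc _ ≤ Real.exp (2 * q) ^ n * Real.exp (-(4 * (n * q))) := by gcongr
      _ = _ := by rw [← Real.exp_nat_mul, ← Real.exp_add]; congr 1; ring
  refine le_trans ?_ (ENNReal.ofReal_le_ofReal hb)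
  rw [← bern_sum, ENNReal.ofReal_sum_of_nonneg
    (fun ε _ => mul_nonneg (hp ε) (Real.exp_pos _).le)]
  unfold bernMeasure
  rw [Measure.finsetSum_apply]
  apply Finset.sum_le_sum
  intro ε _
  rw [Measure.smul_apply, smul_eq_mul, ENNReal.ofReal_mul (hp ε)]
  gcongr
  rw [Measure.dirac_apply' _ (Set.toFinite _).measurableSet]
  by_cases h : ε ∈ {ε : Fin n → Bool | 4 * (n * q) < ∑ i, (if ε i then (1 : ℝ) else 0)}
  · rw [Set.indicator_of_mem h]
    simp only [Pi.one_apply]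
    rw [ENNReal.one_le_ofReal]
    apply Real.one_le_exp
    have : 4 * (n * q) < ∑ i, (if ε i then (1 : ℝ) else 0) := h
    linarith
  · rw [Set.indicator_of_notMem h]; exact zero_le

lemma final_limit (c ρ κ : ℝ) (hc : 0 < c) (hκhalf : κ < 1 / 2) (hκρ : 2 * κ < ρ) :
    Tendsto (fun n : ℕ => 2 * ((n : ℝ) + 1) * Real.exp (2 * (2 * ((2 * n : ℕ) : ℝ) ^ (1 - ρ))
      - n * (c * (((2 * n : ℕ) : ℝ) ^ (-κ)) ^ 2))) atTop (nhds 0) := by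
  have hN : Tendsto (fun n : ℕ => ((2 * n : ℕ) : ℝ)) atTop atTop := by
    apply tendsto_natCast_atTop_atTop.comp
    exact tendsto_id.const_mul_atTop' (by norm_num)
  suffices h : Tendsto (fun x : ℝ => 2 * (x / 2 + 1) * Real.exp (2 * (2 * x ^ (1 - ρ))
      - x / 2 * (c * (x ^ (-κ)) ^ 2))) atTop (nhds 0) by
    refine (h.comp hN).congr (fun n => ?_)
    simp only [Function.comp]
    push_cast
    congr 2
    · ring
    · ring_nf
  have hs : 0 < 1 - 2 * κ := by linarith
  have hy : Tendsto (fun x : ℝ => x ^ (1 - 2 * κ)) atTop atTop := tendsto_rpow_atTop hs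
  have h1 := (tendsto_rpow_mul_exp_neg_mul_atTop_nhds_zero (1 / (1 - 2 * κ)) (c / 4)
    (by positivity)).comp hy
  have h2 : ∀ᶠ x : ℝ in atTop, x ^ (-(ρ - 2 * κ)) < c / 16 :=
    (tendsto_rpow_neg_atTop (by linarith : 0 < ρ - 2 * κ)).eventually
      (gt_mem_nhds (by positivity))
  have h3 := h1.const_mul 3
  rw [mul_zero] at h3
  refine squeeze_zero' ?_ ?_ h3
  · filter_upwards [eventually_ge_atTop 1] with x hx
    have : 0 ≤ x := by linarith
    positivity
  · filter_upwards [h2, eventually_ge_atTop 1] with x hx hx1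
    have hx0 : 0 < x := by linarith
    simp only [Function.comp]
    have e1 : (x ^ (1 - 2 * κ)) ^ (1 / (1 - 2 * κ)) = x := by
      rw [← Real.rpow_mul hx0.le, mul_one_div_cancel hs.ne', Real.rpow_one]
    have e2 : x * (x ^ (-κ)) ^ 2 = x ^ (1 - 2 * κ) := by
      rw [← Real.rpow_natCast, ← Real.rpow_mul hx0.le]
      nth_rw 1 [← Real.rpow_one x]
      rw [← Real.rpow_add hx0]
      congr 1; push_cast; ring
    have e3 : x ^ (1 - ρ) = x ^ (1 - 2 * κ) * x ^ (-(ρ - 2 * κ)) := by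
      rw [← Real.rpow_add hx0]; congr 1; ring
    have hyp : 0 < x ^ (1 - 2 * κ) := by positivity
    rw [e1]
    have e4 : 2 * (2 * x ^ (1 - ρ)) - x / 2 * (c * (x ^ (-κ)) ^ 2)
        ≤ -(c / 4) * x ^ (1 - 2 * κ) := by
      rw [e3, show x / 2 * (c * (x ^ (-κ)) ^ 2) = c / 2 * (x * (x ^ (-κ)) ^ 2) by ring, e2]
      nlinarith
    have e5 : 2 * (x / 2 + 1) ≤ 3 * x := by linarith
    calc _ ≤ (3 * x) * Real.exp (-(c / 4) * x ^ (1 - 2 * κ)) := by gcongr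
      _ = _ := by ring

/-- Proposition 4.1(2): for `β > 2`, `α_N p(N) = N^{−ρ}` with `ρ > 0`, `2κ < ρ` and
`0 < κ < 1/2`, if there is `δ ∈ (0,1)` with `∑_N exp(−(δ²/6) N p(N)) < ∞`, then for
`P`-almost every realization of the dilution variables,
`μ^ε_{N,α_N,β}((m₁,m₂) ∉ A_κ^N) → 0` as `N → ∞` through even integers. -/
theorem diluted_concentration_almost_surely (β ρ κ : ℝ) (hβ : 2 < β) (hρ : 0 < ρ)
    (hκ0 : 0 < κ) (hκhalf : κ < 1 / 2) (hκρ : 2 * κ < ρ)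
    (mp : ℝ) (hfix : mp = Real.tanh (β / 2 * mp))
    (hmax : ∀ z : ℝ, z = Real.tanh (β / 2 * z) → z ≤ mp)
    (α p : ℕ → ℝ) (hp : ∀ N, p N ∈ Set.Ioc (0 : ℝ) 1)
    (hαp : ∀ N : ℕ, 1 ≤ N → α N * p N = (N : ℝ) ^ (-ρ))
    (hsum : ∃ δ : ℝ, δ ∈ Set.Ioo (0 : ℝ) 1 ∧
      Summable fun N : ℕ => Real.exp (-(δ ^ 2 / 6) * ((N : ℝ) * p N)))
    (Ω : Type) [MeasurableSpace Ω] (P : Measure Ω) [IsProbabilityMeasure P]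
    (E : Ω → (n : ℕ) → Fin n → Bool)
    (hlaw : ∀ n : ℕ, Measure.map (fun ω => E ω n) P = bernMeasure n (p (2 * n))) :
    ∀ᵐ ω ∂P,
      Tendsto
        (fun n : ℕ =>
          dilMagDist n (α (2 * n)) β (E ω n) {x : ℝ × ℝ | ¬ memTyp mp κ (2 * n) x})
        atTop (nhds (0 : ENNReal)) := by
  obtain ⟨δ, hδ, hsum⟩ := hsum
  obtain ⟨c, hc, hbad⟩ := cwG_bad (β / 2) mp (by linarith) hfix hmax
  have hmeas : ∀ n, AEMeasurable (fun ω => E ω n) P := by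
    intro n
    by_contra h
    have h1 := hlaw n
    rw [Measure.map_of_not_aemeasurable h] at h1
    have h2 := bern_univ n (p (2 * n)) (hp _)
    rw [← h1] at h2
    simp at h2
  set T : ℕ → Set Ω := fun n =>
    {ω | 4 * (n * p (2 * n)) < ∑ i, (if E ω n i then (1 : ℝ) else 0)} with hT
  have hPT : ∀ n, P (T n) ≤ ENNReal.ofReal (Real.exp (-(2 * n * p (2 * n)))) := by
    intro n
    have h1 := bern_tail n (p (2 * n)) (hp _)
    rw [← hlaw n, Measure.map_apply_of_aemeasurable (hmeas n) (Set.toFinite _).measurableSet] at h1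
    exact h1
  have hsm : Summable fun n : ℕ => Real.exp (-(2 * n * p (2 * n))) := by
    have h1 := hsum.comp_injective (i := fun n : ℕ => 2 * n)
      (fun a b h => by simpa using h)
    refine Summable.of_nonneg_of_le (fun n => (Real.exp_pos _).le) (fun n => ?_) h1
    simp only [Function.comp]
    apply Real.exp_le_exp.2
    have h2 : 0 ≤ ((2 * n : ℕ) : ℝ) * p (2 * n) := by
      have := (hp (2 * n)).1
      positivity
    have h3 : δ ^ 2 / 6 ≤ 1 := by nlinarith [hδ.1, hδ.2]
    push_cast at *
    nlinarith
  have hBC : ∀ᵐ ω ∂P, ∀ᶠ n in atTop, ω ∉ T n := by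
    apply ae_eventually_notMem
    apply ne_top_of_le_ne_top _ (ENNReal.tsum_le_tsum hPT)
    rw [← ENNReal.ofReal_tsum_of_nonneg (fun n => (Real.exp_pos _).le) hsm]
    exact ENNReal.ofReal_ne_top
  filter_upwards [hBC] with ω hω
  have hlim := ENNReal.tendsto_ofReal (final_limit c ρ κ hc hκhalf hκρ)
  rw [ENNReal.ofReal_zero] at hlim
  refine tendsto_of_tendsto_of_tendsto_of_le_of_le' tendsto_const_nhds hlim
    (Eventually.of_forall fun n => zero_le) ?_
  filter_upwards [hω, eventually_gt_atTop 0] with n hn hn0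
  have hn' : ∑ i, (if E ω n i then (1 : ℝ) else 0) ≤ 4 * (n * p (2 * n)) := not_lt.1 hn
  have hpp := (hp (2 * n)).1
  have hap := hαp (2 * n) (by omega)
  have hNpos : (0 : ℝ) < ((2 * n : ℕ) : ℝ) := by positivity
  have hα : 0 ≤ α (2 * n) := by
    have h1 : 0 < α (2 * n) * p (2 * n) := by rw [hap]; positivity
    exact ((pos_iff_pos_of_mul_pos h1).2 hpp).le
  refine dilMagDist_bad n hn0 (α (2 * n)) β c _ mp _ (by linarith) hα (E ω n) ?_ κ rfl hbad
  calc _ ≤ α (2 * n) * (4 * (n * p (2 * n))) := by gcongr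
    _ = 2 * (((2 * n : ℕ) : ℝ) * (α (2 * n) * p (2 * n))) := by push_cast; ring
    _ = _ := by
      rw [hap, sub_eq_add_neg, Real.rpow_add hNpos, Real.rpow_one]

end
end

section
/- Let β > 2 and 0 < κ < 1/2, and let (α_N) satisfy α_N > 0. For every δ > 0 there exist c_δ > 0 and N₀ such that for all even N ≥ N₀, all admissible pairs (μ₁, μ₂) ∈ A_κ^N, and every ε ∈ {0,1}^{B₁} with M_N := ∑_{i∈B₁} ε_i ≥ 1, writing S_ε(σ) := ∑_{i∈B₁} ε_i σᵢ σ_{i+N/2}, one has exp(α_N M_N μ₁μ₂ − δ α_N M_N)·(1 − exp(−c_δ M_N)) ≤ E_{ν_N^{μ₁,μ₂}}[exp(α_N S_ε)] ≤ exp(α_N M_N μ₁μ₂ + δ α_N M_N) + exp(α_N M_N − c_δ M_N). -/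
open MeasureTheory Filter

noncomputable section

/-- The pair `(μ₁, μ₂)` is admissible for system size `N`: both `N(1+μ₁)/4` and
`N(1+μ₂)/4` are natural numbers. -/
def admissible (N : ℕ) (μ₁ μ₂ : ℝ) : Prop :=
  (∃ k : ℕ, (N : ℝ) * (1 + μ₁) / 4 = k) ∧ ∃ k : ℕ, (N : ℝ) * (1 + μ₂) / 4 = k

/-- The probability of the event `A` under the uniform measure `ν_N^{μ₁,μ₂}` on
`Ω_N(μ₁,μ₂) = {σ : m₁(σ) = μ₁, m₂(σ) = μ₂}` (with `N = 2n`). -/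
def nuProb (n : ℕ) (μ₁ μ₂ : ℝ) (A : Set (TwoConf n)) : ℝ :=
  (∑ σ : TwoConf n,
      ({σ : TwoConf n | mag1 n σ = μ₁ ∧ mag2 n σ = μ₂} ∩ A).indicator
        (fun _ => (1 : ℝ)) σ) /
    ∑ σ : TwoConf n,
      {σ : TwoConf n | mag1 n σ = μ₁ ∧ mag2 n σ = μ₂}.indicator (fun _ => (1 : ℝ)) σ

/-- The expectation of `g` under the uniform measure `ν_N^{μ₁,μ₂}` on
`Ω_N(μ₁,μ₂)` (with `N = 2n`). -/
def nuExp (n : ℕ) (μ₁ μ₂ : ℝ) (g : TwoConf n → ℝ) : ℝ :=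
  (∑ σ : TwoConf n, {σ : TwoConf n | mag1 n σ = μ₁ ∧ mag2 n σ = μ₂}.indicator g σ) /
    ∑ σ : TwoConf n,
      {σ : TwoConf n | mag1 n σ = μ₁ ∧ mag2 n σ = μ₂}.indicator (fun _ => (1 : ℝ)) σ

/-- The slice of configurations of one block with given magnetization. -/
def slc (n : ℕ) (μ : ℝ) : Finset (Fin n → Bool) := by
  classical
  exact Finset.univ.filter fun f => ∑ i, spinVal (f i) = n * μ

lemma mem_slc {n : ℕ} {μ : ℝ} {f : Fin n → Bool} :
    f ∈ slc n μ ↔ ∑ i, spinVal (f i) = n * μ := by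
  simp [slc]

/-- The indicator of `x = b`. -/
def ind (b x : Bool) : ℝ := if x = b then 1 else 0

lemma ind_eq (b x : Bool) : ind b x = (1 + spinVal b * spinVal x) / 2 := by
  cases b <;> cases x <;> simp [ind, spinVal]

lemma ind_nonneg (b x : Bool) : 0 ≤ ind b x := by
  unfold ind; split_ifs <;> norm_num

lemma ind_sq (b x : Bool) : ind b x * ind b x = ind b x := by
  unfold ind; split_ifs <;> norm_num

/-- Number of configurations of the slice equal to `b` on `F`. -/
def Zc (n : ℕ) (μ : ℝ) (b : Bool) (F : Finset (Fin n)) : ℝ :=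
  ∑ f ∈ slc n μ, ∏ i ∈ F, ind b (f i)

lemma Zc_nonneg (n : ℕ) (μ : ℝ) (b : Bool) (F : Finset (Fin n)) : 0 ≤ Zc n μ b F :=
  Finset.sum_nonneg fun _ _ => Finset.prod_nonneg fun _ _ => ind_nonneg _ _

lemma Zc_swap {n : ℕ} {μ : ℝ} {b : Bool} {F : Finset (Fin n)} {a l : Fin n}
    (ha : a ∉ F) (hl : l ∉ F) :
    Zc n μ b (insert l F) = Zc n μ b (insert a F) := by
  unfold Zc
  refine Finset.sum_bij' (fun f _ => f ∘ Equiv.swap a l) (fun f _ => f ∘ Equiv.swap a l)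
    ?_ ?_ ?_ ?_ ?_
  · intro f hf
    rw [mem_slc] at hf ⊢
    rw [← hf]
    exact Equiv.sum_comp (Equiv.swap a l) (fun i => spinVal (f i))
  · intro f hf
    rw [mem_slc] at hf ⊢
    rw [← hf]
    exact Equiv.sum_comp (Equiv.swap a l) (fun i => spinVal (f i))
  · intro f hf; funext i; simp
  · intro f hf; funext i; simp
  · intro f hf
    rw [Finset.prod_insert ha, Finset.prod_insert hl]
    simp only [Function.comp, Equiv.swap_apply_left]
    congr 1
    refine Finset.prod_congr rfl fun i hi => ?_
    rw [Equiv.swap_apply_of_ne_of_ne]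
    · rintro rfl; exact ha hi
    · rintro rfl; exact hl hi

lemma Zc_step {n : ℕ} {μ : ℝ} {b : Bool} {F : Finset (Fin n)} {a : Fin n} (ha : a ∉ F) :
    ((n : ℝ) - F.card) * Zc n μ b (insert a F)
      = (n * ((1 + spinVal b * μ) / 2) - F.card) * Zc n μ b F := by
  have h1 : ∑ l ∈ Fᶜ, Zc n μ b (insert l F) = ((n : ℝ) - F.card) * Zc n μ b (insert a F) := by
    rw [Finset.sum_congr rfl (fun l hl => Zc_swap ha (Finset.mem_compl.1 hl)),
      Finset.sum_const, nsmul_eq_mul, Finset.card_compl, Fintype.card_fin, Nat.cast_sub]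
    exact (Finset.card_le_univ F).trans (by simp)
  rw [← h1]
  unfold Zc
  rw [Finset.sum_comm, Finset.mul_sum]
  refine Finset.sum_congr rfl fun f hf => ?_
  rw [mem_slc] at hf
  have h2 : ∀ l ∈ Fᶜ, ∏ i ∈ insert l F, ind b (f i) = ind b (f l) * ∏ i ∈ F, ind b (f i) :=
    fun l hl => Finset.prod_insert (Finset.mem_compl.1 hl)
  rw [Finset.sum_congr rfl h2, ← Finset.sum_mul]
  by_cases hall : ∀ i ∈ F, f i = b
  · congr 1
    have h3 : ∑ i ∈ F, ind b (f i) = F.card := by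
      rw [Finset.sum_congr rfl (fun i hi => by rw [ind, if_pos (hall i hi)])]; simp
    have h4 : ∑ i, ind b (f i) = n * ((1 + spinVal b * μ) / 2) := by
      simp only [ind_eq]
      rw [← Finset.sum_div, Finset.sum_add_distrib, ← Finset.mul_sum, hf]
      simp; ring
    have h5 := Finset.sum_add_sum_compl F (fun i => ind b (f i))
    linarith
  · push Not at hall
    obtain ⟨i, hi, hne⟩ := hall
    have : ∏ i ∈ F, ind b (f i) = 0 := Finset.prod_eq_zero hi (by simp [ind, hne])
    rw [this]; simp

lemma Zc_le {n : ℕ} {μ : ℝ} {b : Bool} {F : Finset (Fin n)} {a : Fin n} (ha : a ∉ F)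
    (hμ : |μ| ≤ 1) :
    Zc n μ b (insert a F) ≤ (1 + spinVal b * μ) / 2 * Zc n μ b F := by
  have h := Zc_step (μ := μ) (b := b) ha
  have hc : F.card < n := by
    have := Finset.card_le_univ (insert a F)
    rw [Finset.card_insert_of_notMem ha, Fintype.card_fin] at this
    omega
  have hc' : (0 : ℝ) < (n : ℝ) - F.card := by
    have : (F.card : ℝ) < n := by exact_mod_cast hc
    linarith
  have hp : (1 + spinVal b * μ) / 2 ≤ 1 := by
    have := abs_le.1 hμ
    cases b <;> simp [spinVal] <;> linarith
  refine le_of_mul_le_mul_left ?_ hc'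
  rw [h]
  have hj : (0 : ℝ) ≤ F.card := by positivity
  have hz := Zc_nonneg n μ b F
  have : (0 : ℝ) ≤ F.card * (1 - (1 + spinVal b * μ) / 2) * Zc n μ b F :=
    mul_nonneg (mul_nonneg hj (by linarith)) hz
  nlinarith

lemma prod_bound {n : ℕ} {μ : ℝ} {b : Bool} {w : ℝ} (hw : 0 ≤ w) (hμ : |μ| ≤ 1)
    (E : Finset (Fin n)) : ∀ F : Finset (Fin n), Disjoint E F →
    ∑ f ∈ slc n μ, (∏ i ∈ F, ind b (f i)) * ∏ i ∈ E, (1 + w * ind b (f i))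
      ≤ (1 + w * ((1 + spinVal b * μ) / 2)) ^ E.card * Zc n μ b F := by
  have hp : 0 ≤ (1 + spinVal b * μ) / 2 := by
    have := abs_le.1 hμ
    cases b <;> simp [spinVal] <;> linarith
  induction E using Finset.induction_on with
  | empty => intro F _; simp [Zc]
  | insert a E haE ih =>
    intro F hd
    rw [Finset.disjoint_insert_left] at hd
    obtain ⟨haF, hd⟩ := hd
    have e1 : ∑ f ∈ slc n μ, (∏ i ∈ F, ind b (f i)) * ∏ i ∈ insert a E, (1 + w * ind b (f i))
        = ∑ f ∈ slc n μ, (∏ i ∈ F, ind b (f i)) * ∏ i ∈ E, (1 + w * ind b (f i))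
        + w * ∑ f ∈ slc n μ, (∏ i ∈ insert a F, ind b (f i)) *
            ∏ i ∈ E, (1 + w * ind b (f i)) := by
      rw [Finset.mul_sum, ← Finset.sum_add_distrib]
      refine Finset.sum_congr rfl fun f _ => ?_
      rw [Finset.prod_insert haE, Finset.prod_insert haF]
      ring
    rw [e1, Finset.card_insert_of_notMem haE]
    have i1 := ih F hd
    have i2 := ih (insert a F) (by
      rw [Finset.disjoint_insert_right]; exact ⟨haE, hd⟩)
    have i3 := Zc_le (b := b) haF hμ
    set Q := (1 + w * ((1 + spinVal b * μ) / 2)) with hQ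
    have hQ0 : 0 ≤ Q ^ E.card := by positivity
    calc _ ≤ Q ^ E.card * Zc n μ b F + w * (Q ^ E.card * Zc n μ b (insert a F)) := by gcongr
      _ ≤ Q ^ E.card * Zc n μ b F
          + w * (Q ^ E.card * ((1 + spinVal b * μ) / 2 * Zc n μ b F)) := by gcongr
      _ = Q ^ (E.card + 1) * Zc n μ b F := by rw [hQ]; ring

lemma exp_quad {x : ℝ} (hx : |x| ≤ 1) : Real.exp x ≤ 1 + x + x ^ 2 := by
  have := abs_le.1 (Real.abs_exp_sub_one_sub_id_le hx)
  linarith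

lemma mgf_aux {n : ℕ} {μ : ℝ} (hμ : |μ| ≤ 1) (b : Bool) {u : ℝ} (hu : 0 ≤ u) (hu1 : u ≤ 1)
    (E : Finset (Fin n)) :
    ∑ f ∈ slc n μ, Real.exp (spinVal b * u * ∑ i ∈ E, spinVal (f i))
      ≤ Real.exp (spinVal b * u * μ * E.card + u ^ 2 * E.card) * (slc n μ).card := by
  have hw : 0 ≤ Real.exp (2 * u) - 1 := by
    have := Real.add_one_le_exp (2 * u); linarith
  have key := prod_bound (b := b) hw hμ E ∅ (by simp)
  have hexp : Real.exp (2 * u) = Real.exp u * Real.exp u := by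
    rw [← Real.exp_add]; ring_nf
  have hinv : Real.exp (-u) * Real.exp u = 1 := by rw [← Real.exp_add]; simp
  have e1 : ∀ x : Bool, Real.exp (spinVal b * u * spinVal x)
      = Real.exp (-u) * (1 + (Real.exp (2 * u) - 1) * ind b x) := by
    intro x
    have h2 : Real.exp (-u) * Real.exp (2 * u) = Real.exp u := by
      rw [← Real.exp_add]; ring_nf
    cases b <;> cases x <;> simp [spinVal, ind, h2]
  have e2 : ∀ f : Fin n → Bool, Real.exp (spinVal b * u * ∑ i ∈ E, spinVal (f i))
      = Real.exp (-u) ^ E.card * ∏ i ∈ E, (1 + (Real.exp (2 * u) - 1) * ind b (f i)) := by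
    intro f
    rw [Finset.mul_sum, Real.exp_sum, Finset.prod_congr rfl (fun i _ => e1 (f i)),
      Finset.prod_mul_distrib, Finset.prod_const]
  simp only [e2]
  rw [← Finset.mul_sum]
  have key2 : ∑ f ∈ slc n μ, ∏ i ∈ E, (1 + (Real.exp (2 * u) - 1) * ind b (f i))
      ≤ (1 + (Real.exp (2 * u) - 1) * ((1 + spinVal b * μ) / 2)) ^ E.card * (slc n μ).card := by
    simpa [Zc] using key
  have hq : Real.exp (-u) * (1 + (Real.exp (2 * u) - 1) * ((1 + spinVal b * μ) / 2))
      ≤ Real.exp (spinVal b * u * μ + u ^ 2) := by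
    have h1 := exp_quad (x := u) (by rw [abs_of_nonneg hu]; exact hu1)
    have h2 := exp_quad (x := -u) (by rw [abs_neg, abs_of_nonneg hu]; exact hu1)
    have h3 := Real.add_one_le_exp (spinVal b * u * μ + u ^ 2)
    have hp : 0 ≤ (1 + spinVal b * μ) / 2 ∧ (1 + spinVal b * μ) / 2 ≤ 1 := by
      have := abs_le.1 hμ
      constructor <;> cases b <;> simp [spinVal] <;> linarith
    have e3 : Real.exp (-u) * (1 + (Real.exp (2 * u) - 1) * ((1 + spinVal b * μ) / 2))
        = (1 - (1 + spinVal b * μ) / 2) * Real.exp (-u)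
          + (1 + spinVal b * μ) / 2 * Real.exp u := by
      rw [hexp]
      linear_combination ((1 + spinVal b * μ) / 2 * Real.exp u) * hinv
    rw [e3]
    set p := (1 + spinVal b * μ) / 2 with hpdef
    have h5 : (1 - p) * Real.exp (-u) ≤ (1 - p) * (1 + -u + (-u) ^ 2) :=
      mul_le_mul_of_nonneg_left h2 (by linarith [hp.2])
    have h6 : p * Real.exp u ≤ p * (1 + u + u ^ 2) := mul_le_mul_of_nonneg_left h1 hp.1
    have h7 : (1 - p) * (1 + -u + (-u) ^ 2) + p * (1 + u + u ^ 2)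
        = spinVal b * u * μ + u ^ 2 + 1 := by rw [hpdef]; ring
    linarith
  have hq0 : 0 ≤ Real.exp (-u) * (1 + (Real.exp (2 * u) - 1) * ((1 + spinVal b * μ) / 2)) := by
    have hp : 0 ≤ (1 + spinVal b * μ) / 2 := by
      have := abs_le.1 hμ
      cases b <;> simp [spinVal] <;> linarith
    positivity
  calc _ ≤ Real.exp (-u) ^ E.card *
        ((1 + (Real.exp (2 * u) - 1) * ((1 + spinVal b * μ) / 2)) ^ E.card * (slc n μ).card) := by
        gcongr
    _ = (Real.exp (-u) * (1 + (Real.exp (2 * u) - 1) * ((1 + spinVal b * μ) / 2))) ^ E.card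
        * (slc n μ).card := by rw [mul_pow]; ring
    _ ≤ (Real.exp (spinVal b * u * μ + u ^ 2)) ^ E.card * (slc n μ).card := by gcongr
    _ = _ := by
      rw [← Real.exp_nat_mul]; congr 2; ring

lemma mgf_bound {n : ℕ} {μ : ℝ} (hμ : |μ| ≤ 1) {t : ℝ} (ht : |t| ≤ 1) (E : Finset (Fin n)) :
    ∑ f ∈ slc n μ, Real.exp (t * ∑ i ∈ E, spinVal (f i))
      ≤ Real.exp (t * μ * E.card + t ^ 2 * E.card) * (slc n μ).card := by
  rcases le_total 0 t with h | h
  · rw [abs_of_nonneg h] at ht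
    simpa [spinVal] using mgf_aux hμ true h ht E
  · rw [abs_of_nonpos h] at ht
    simpa [spinVal] using mgf_aux hμ false (neg_nonneg.2 h) ht E

/-- Mean of a single spin. -/
lemma mean_spin {n : ℕ} (μ : ℝ) (a : Fin n) :
    ∑ f ∈ slc n μ, spinVal (f a) = μ * (slc n μ).card := by
  have h := Zc_step (μ := μ) (b := true) (F := ∅) (a := a) (by simp)
  have hn : (n : ℝ) ≠ 0 := by
    have := a.pos
    positivity
  simp only [Finset.card_empty, Nat.cast_zero, sub_zero, mul_assoc] at h
  have h := mul_left_cancel₀ hn h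
  simp only [Zc, insert_empty_eq, Finset.prod_singleton, Finset.prod_empty, Finset.sum_const,
    nsmul_eq_mul, mul_one, ind_eq] at h
  rw [← Finset.sum_div, Finset.sum_add_distrib] at h
  simp [spinVal] at h
  simp only [spinVal]
  linarith

/-- Conditional MGF bound for the second block. -/
lemma inner_bound {n : ℕ} {μ : ℝ} (hμ : |μ| ≤ 1) {t : ℝ} (ht0 : 0 ≤ t) (ht : t ≤ 1 / 2)
    (E : Finset (Fin n)) (f : Fin n → Bool) :
    ∑ g ∈ slc n μ, Real.exp (t * ∑ i ∈ E, spinVal (f i) * spinVal (g i))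
      ≤ Real.exp (t * μ * ∑ i ∈ E, spinVal (f i) + 2 * t ^ 2 * E.card) * (slc n μ).card := by
  set P := E.filter (fun i => f i = true) with hP
  set Q := E.filter (fun i => ¬ f i = true) with hQ
  have hcard : (E.card : ℝ) = P.card + Q.card := by
    rw [hP, hQ]; exact_mod_cast (Finset.card_filter_add_card_filter_not (s := E) _).symm
  have hsplit : ∀ h : Fin n → ℝ, ∑ i ∈ E, spinVal (f i) * h i = ∑ i ∈ P, h i - ∑ i ∈ Q, h i := by
    intro h
    rw [← Finset.sum_filter_add_sum_filter_not E (fun i => f i = true), sub_eq_add_neg,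
      ← Finset.sum_neg_distrib]
    congr 1
    · refine Finset.sum_congr rfl fun i hi => ?_
      simp [spinVal, (Finset.mem_filter.1 hi).2]
    · refine Finset.sum_congr rfl fun i hi => ?_
      have := (Finset.mem_filter.1 hi).2
      simp [spinVal, this]
  have hs1 : ∑ i ∈ E, spinVal (f i) = P.card - Q.card := by
    have := hsplit (fun _ => 1)
    simpa using this
  have b1 := mgf_bound hμ (t := 2 * t) (by rw [abs_of_nonneg (by linarith)]; linarith) P
  have b2 := mgf_bound hμ (t := -(2 * t))
    (by rw [abs_neg, abs_of_nonneg (by linarith)]; linarith) Q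
  set K := t * μ * ∑ i ∈ E, spinVal (f i) + 2 * t ^ 2 * E.card with hK
  set KP := t * μ * P.card + 2 * t ^ 2 * P.card with hKP
  set KQ := -t * μ * Q.card + 2 * t ^ 2 * Q.card with hKQ
  have hKs : K = KP + KQ := by rw [hK, hs1, hcard, hKP, hKQ]; ring
  have pt : ∀ g : Fin n → Bool, Real.exp (t * ∑ i ∈ E, spinVal (f i) * spinVal (g i))
      ≤ Real.exp K / 2 * (Real.exp (-(2 * KP)) * Real.exp (2 * t * ∑ i ∈ P, spinVal (g i))
        + Real.exp (-(2 * KQ)) * Real.exp (-(2 * t) * ∑ i ∈ Q, spinVal (g i))) := by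
    intro g
    rw [hsplit]
    set X := ∑ i ∈ P, spinVal (g i)
    set Y := ∑ i ∈ Q, spinVal (g i)
    have a1 : Real.exp (t * (X - Y)) = Real.exp K * (Real.exp (t * X - KP) *
        Real.exp (-t * Y - KQ)) := by
      rw [← Real.exp_add, ← Real.exp_add, hKs]; ring_nf
    have a2 : Real.exp (-(2 * KP)) * Real.exp (2 * t * X) = Real.exp (t * X - KP) ^ 2 := by
      rw [← Real.exp_add, ← Real.exp_nat_mul]; push_cast; ring_nf
    have a3 : Real.exp (-(2 * KQ)) * Real.exp (-(2 * t) * Y) = Real.exp (-t * Y - KQ) ^ 2 := by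
      rw [← Real.exp_add, ← Real.exp_nat_mul]; push_cast; ring_nf
    rw [a1, a2, a3, div_mul_eq_mul_div, mul_div_assoc]
    refine mul_le_mul_of_nonneg_left ?_ (Real.exp_pos _).le
    nlinarith [sq_nonneg (Real.exp (t * X - KP) - Real.exp (-t * Y - KQ))]
  have c1 : Real.exp (-(2 * KP)) * ∑ g ∈ slc n μ, Real.exp (2 * t * ∑ i ∈ P, spinVal (g i))
      ≤ (slc n μ).card := by
    calc _ ≤ Real.exp (-(2 * KP)) * (Real.exp (2 * t * μ * P.card + (2 * t) ^ 2 * P.card)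
          * (slc n μ).card) := by gcongr
      _ = (slc n μ).card := by
        rw [← mul_assoc, ← Real.exp_add, hKP]; ring_nf; simp
  have c2 : Real.exp (-(2 * KQ)) * ∑ g ∈ slc n μ, Real.exp (-(2 * t) * ∑ i ∈ Q, spinVal (g i))
      ≤ (slc n μ).card := by
    calc _ ≤ Real.exp (-(2 * KQ)) * (Real.exp (-(2 * t) * μ * Q.card + (-(2 * t)) ^ 2 * Q.card)
          * (slc n μ).card) := by gcongr
      _ = (slc n μ).card := by
        rw [← mul_assoc, ← Real.exp_add, hKQ]; ring_nf; simp
  calc _ ≤ _ := Finset.sum_le_sum fun g _ => pt g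
    _ = Real.exp K / 2 *
        (Real.exp (-(2 * KP)) * ∑ g ∈ slc n μ, Real.exp (2 * t * ∑ i ∈ P, spinVal (g i))
        + Real.exp (-(2 * KQ)) * ∑ g ∈ slc n μ, Real.exp (-(2 * t) * ∑ i ∈ Q, spinVal (g i))) := by
        rw [← Finset.mul_sum, Finset.sum_add_distrib, ← Finset.mul_sum, ← Finset.mul_sum]
    _ ≤ Real.exp K / 2 * ((slc n μ).card + (slc n μ).card) := by gcongr
    _ = _ := by ring

lemma full_bound {n : ℕ} {μ₁ μ₂ : ℝ} (hμ₁ : |μ₁| ≤ 1) (hμ₂ : |μ₂| ≤ 1) {t : ℝ} (ht0 : 0 ≤ t)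
    (ht : t ≤ 1 / 2) (E : Finset (Fin n)) :
    ∑ f ∈ slc n μ₁, ∑ g ∈ slc n μ₂, Real.exp (t * ∑ i ∈ E, spinVal (f i) * spinVal (g i))
      ≤ Real.exp (t * E.card * (μ₁ * μ₂) + 3 * t ^ 2 * E.card) *
        ((slc n μ₁).card * (slc n μ₂).card) := by
  have habs : |t * μ₂| ≤ 1 := by
    rw [abs_mul, abs_of_nonneg ht0]
    nlinarith [abs_nonneg μ₂]
  have hm := mgf_bound hμ₁ habs E
  have hsq : (t * μ₂) ^ 2 ≤ t ^ 2 := by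
    have h1 : μ₂ ^ 2 ≤ 1 := by rw [← sq_abs]; nlinarith [abs_nonneg μ₂]
    rw [mul_pow]; nlinarith [sq_nonneg t]
  calc _ ≤ ∑ f ∈ slc n μ₁, Real.exp (t * μ₂ * ∑ i ∈ E, spinVal (f i) + 2 * t ^ 2 * E.card)
        * (slc n μ₂).card := Finset.sum_le_sum fun f _ => inner_bound hμ₂ ht0 ht E f
    _ = (∑ f ∈ slc n μ₁, Real.exp (t * μ₂ * ∑ i ∈ E, spinVal (f i)))
        * (Real.exp (2 * t ^ 2 * E.card) * (slc n μ₂).card) := by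
      rw [Finset.sum_mul]
      refine Finset.sum_congr rfl fun f _ => ?_
      rw [Real.exp_add]; ring
    _ ≤ (Real.exp (t * μ₂ * μ₁ * E.card + (t * μ₂) ^ 2 * E.card) * (slc n μ₁).card)
        * (Real.exp (2 * t ^ 2 * E.card) * (slc n μ₂).card) := by gcongr
    _ ≤ (Real.exp (t * μ₂ * μ₁ * E.card + t ^ 2 * E.card) * (slc n μ₁).card)
        * (Real.exp (2 * t ^ 2 * E.card) * (slc n μ₂).card) := by gcongr
    _ = (Real.exp (t * μ₂ * μ₁ * E.card + t ^ 2 * E.card) * Real.exp (2 * t ^ 2 * E.card))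
        * ((slc n μ₁).card * (slc n μ₂).card) := by ring
    _ = _ := by rw [← Real.exp_add]; ring_nf

lemma full_mean {n : ℕ} (μ₁ μ₂ : ℝ) (E : Finset (Fin n)) :
    ∑ f ∈ slc n μ₁, ∑ g ∈ slc n μ₂, ∑ i ∈ E, spinVal (f i) * spinVal (g i)
      = E.card * (μ₁ * μ₂) * ((slc n μ₁).card * (slc n μ₂).card) := by
  have h1 : ∀ f ∈ slc n μ₁, ∑ g ∈ slc n μ₂, ∑ i ∈ E, spinVal (f i) * spinVal (g i)
      = ∑ i ∈ E, spinVal (f i) * (μ₂ * (slc n μ₂).card) := by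
    intro f _
    rw [Finset.sum_comm]
    refine Finset.sum_congr rfl fun i _ => ?_
    rw [← Finset.mul_sum, mean_spin]
  rw [Finset.sum_congr rfl h1, Finset.sum_comm]
  have h2 : ∀ i ∈ E, ∑ f ∈ slc n μ₁, spinVal (f i) * (μ₂ * (slc n μ₂).card)
      = μ₁ * (slc n μ₁).card * (μ₂ * (slc n μ₂).card) := by
    intro i _
    rw [← Finset.sum_mul, mean_spin]
  rw [Finset.sum_congr rfl h2, Finset.sum_const, nsmul_eq_mul]
  ring

lemma sum_indicator {n : ℕ} (hn : 0 < n) (μ₁ μ₂ : ℝ) (g : TwoConf n → ℝ) :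
    ∑ σ : TwoConf n, {σ : TwoConf n | mag1 n σ = μ₁ ∧ mag2 n σ = μ₂}.indicator g σ
      = ∑ a ∈ slc n μ₁, ∑ b ∈ slc n μ₂, g (a, b) := by
  classical
  have hn' : (n : ℝ) ≠ 0 := by positivity
  have hiff : ∀ x μ : ℝ, (2 / (2 * n : ℝ)) * x = μ ↔ x = n * μ := by
    intro x μ
    constructor
    · rintro rfl; field_simp
    · rintro rfl; field_simp
  have hset : ∀ σ : TwoConf n, σ ∈ {σ : TwoConf n | mag1 n σ = μ₁ ∧ mag2 n σ = μ₂} ↔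
      σ ∈ slc n μ₁ ×ˢ slc n μ₂ := by
    intro σ
    rw [Finset.mem_product, mem_slc, mem_slc, Set.mem_ofPred_eq, mag1, mag2, hiff, hiff]
  rw [← Finset.sum_product']
  simp only [Set.indicator_apply, hset]
  rw [Finset.sum_ite_mem, Finset.univ_inter]

lemma slc_nonempty {n k : ℕ} {μ : ℝ} (hk : ((2 * n : ℕ) : ℝ) * (1 + μ) / 4 = k) (hμ : μ ≤ 1) :
    (slc n μ).Nonempty := by
  push_cast at hk
  have hn : (0 : ℝ) ≤ n := by positivity
  have hkn : k ≤ n := by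
    have : (k : ℝ) ≤ n := by nlinarith
    exact_mod_cast this
  refine ⟨fun i => decide (i.val < k), ?_⟩
  rw [mem_slc]
  have h1 : ∀ i : Fin n, spinVal (decide (i.val < k)) = 2 * (if i.val < k then 1 else 0) - 1 := by
    intro i; by_cases h : i.val < k <;> simp [spinVal, h]; norm_num
  simp only [h1]
  rw [Finset.sum_sub_distrib, ← Finset.mul_sum,
    Fin.sum_univ_eq_sum_range (fun i => if i < k then (1 : ℝ) else 0) n, Finset.sum_boole]
  have h2 : (Finset.range n).filter (fun i => i < k) = Finset.range k := by
    ext i; simp; omega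
  rw [h2]
  simp
  linarith

lemma abs_spin_sum {n : ℕ} (E : Finset (Fin n)) (f g : Fin n → Bool) :
    ∑ i ∈ E, spinVal (f i) * spinVal (g i) ≤ E.card := by
  calc _ ≤ ∑ i ∈ E, (1 : ℝ) := by
        refine Finset.sum_le_sum fun i _ => ?_
        cases f i <;> cases g i <;> simp [spinVal]
    _ = _ := by simp

/-- Corollary (quenched tilted expectation bounds): for `β > 2`, `0 < κ < 1/2`, and
`α_N > 0`, for every `δ > 0` there are `c_δ > 0` and `N₀` such that for all even
`N = 2n ≥ N₀`, all admissible `(μ₁, μ₂) ∈ A_κ^N` and every `ε ∈ {0,1}^{B₁}` with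
`M_N = ∑_{i∈B₁} ε_i ≥ 1`, writing `S_ε(σ) = ∑_{i∈B₁} ε_i σᵢσ_{i+N/2}`,
`exp(α_N M_N μ₁μ₂ − δ α_N M_N)(1 − exp(−c_δ M_N)) ≤ E_{ν_N^{μ₁,μ₂}}[exp(α_N S_ε)]
  ≤ exp(α_N M_N μ₁μ₂ + δ α_N M_N) + exp(α_N M_N − c_δ M_N)`. -/
theorem quenched_tilted_expectation_bounds (β κ : ℝ) (hβ : 2 < β) (hκ0 : 0 < κ)
    (hκ : κ < 1 / 2) (mp : ℝ) (hfix : mp = Real.tanh (β / 2 * mp))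
    (hmax : ∀ z : ℝ, z = Real.tanh (β / 2 * z) → z ≤ mp)
    (α : ℕ → ℝ) (hαpos : ∀ N, 0 < α N) :
    ∀ δ : ℝ, 0 < δ →
      ∃ c : ℝ, 0 < c ∧ ∃ N₀ : ℕ, ∀ n : ℕ, N₀ ≤ 2 * n →
        ∀ μ₁ μ₂ : ℝ, memTyp mp κ (2 * n) (μ₁, μ₂) → admissible (2 * n) μ₁ μ₂ →
          ∀ ε : Fin n → Bool,
            ∀ M : ℝ, M = ((Finset.univ.filter fun i => ε i = true).card : ℝ) → 1 ≤ M →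
              Real.exp (α (2 * n) * M * (μ₁ * μ₂) - δ * (α (2 * n) * M)) *
                  (1 - Real.exp (-c * M))
                ≤ nuExp n μ₁ μ₂ (fun σ =>
                    Real.exp (α (2 * n) *
                      ∑ i, (if ε i then (1 : ℝ) else 0) *
                        (spinVal (σ.1 i) * spinVal (σ.2 i)))) ∧
              nuExp n μ₁ μ₂ (fun σ =>
                    Real.exp (α (2 * n) *
                      ∑ i, (if ε i then (1 : ℝ) else 0) *
                        (spinVal (σ.1 i) * spinVal (σ.2 i))))
                ≤ Real.exp (α (2 * n) * M * (μ₁ * μ₂) + δ * (α (2 * n) * M)) +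
                    Real.exp (α (2 * n) * M - c * M) := by
  intro δ hδ
  have hmp : |mp| < 1 := by rw [hfix]; exact abs_lt.2 ⟨Real.neg_one_lt_tanh _, Real.tanh_lt_one _⟩
  have htend : Tendsto (fun N : ℕ => (N : ℝ) ^ (-κ)) atTop (nhds 0) :=
    (tendsto_rpow_neg_atTop hκ0).comp tendsto_natCast_atTop_atTop
  obtain ⟨N₀, hN₀⟩ := eventually_atTop.1
    (htend.eventually (gt_mem_nhds (show (0 : ℝ) < 1 - |mp| by linarith)))
  set t : ℝ := min (1 / 2) (δ / 6) with ht
  have ht0 : 0 < t := lt_min (by norm_num) (by linarith)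
  have ht1 : t ≤ 1 / 2 := min_le_left _ _
  have ht2 : t ≤ δ / 6 := min_le_right _ _
  refine ⟨t * δ / 2, by positivity, N₀, ?_⟩
  intro n hn μ₁ μ₂ hmem hadm ε M hM hM1
  obtain ⟨s₁, s₂, hs₁, hs₂⟩ := hmem
  obtain ⟨⟨k₁, hk₁⟩, ⟨k₂, hk₂⟩⟩ := hadm
  have hNs := hN₀ (2 * n) hn
  have habs : ∀ (μ : ℝ) (s : Bool), |μ - (if s then mp else -mp)| < ((2 * n : ℕ) : ℝ) ^ (-κ) →
      |μ| ≤ 1 := by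
    intro μ s h
    have h3 : |(if s then mp else -mp)| = |mp| := by cases s <;> simp
    have h4 := abs_sub_abs_le_abs_sub μ (if s then mp else -mp)
    rw [h3] at h4
    linarith
  have hμ₁ := habs μ₁ s₁ hs₁
  have hμ₂ := habs μ₂ s₂ hs₂
  have hne₁ := slc_nonempty hk₁ (abs_le.1 hμ₁).2
  have hne₂ := slc_nonempty hk₂ (abs_le.1 hμ₂).2
  have hn0 : 0 < n := by
    rcases Nat.eq_zero_or_pos n with h | h
    · subst h
      simp at hM
      linarith
    · exact h
  set E := Finset.univ.filter fun i => ε i = true with hE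
  set a := α (2 * n) with ha
  have ha0 : 0 < a := hαpos _
  have hM0 : 0 < M := by linarith
  have hS : ∀ σ : TwoConf n, ∑ i, (if ε i then (1 : ℝ) else 0) *
      (spinVal (σ.1 i) * spinVal (σ.2 i)) = ∑ i ∈ E, spinVal (σ.1 i) * spinVal (σ.2 i) := by
    intro σ
    rw [hE, Finset.sum_filter]
    refine Finset.sum_congr rfl fun i _ => ?_
    split_ifs <;> simp
  simp only [hS]
  unfold nuExp
  rw [sum_indicator hn0, sum_indicator hn0]
  have hD : ∑ x ∈ slc n μ₁, ∑ y ∈ slc n μ₂, (1 : ℝ)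
      = (slc n μ₁).card * (slc n μ₂).card := by simp
  rw [hD]
  have hmean := full_mean (n := n) μ₁ μ₂ E
  have hfull := full_bound hμ₁ hμ₂ ht0.le ht1 E
  rw [← hM] at hmean hfull
  set D : ℝ := (slc n μ₁).card * (slc n μ₂).card with hDdef
  have hDpos : 0 < D := by
    have h1 : (0 : ℝ) < (slc n μ₁).card := by exact_mod_cast hne₁.card_pos
    have h2 : (0 : ℝ) < (slc n μ₂).card := by exact_mod_cast hne₂.card_pos
    exact mul_pos h1 h2
  rw [le_div_iff₀ hDpos, div_le_iff₀ hDpos]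
  constructor
  · have hJ : ∑ x ∈ slc n μ₁, ∑ y ∈ slc n μ₂,
        Real.exp (a * M * (μ₁ * μ₂)) * (1 - a * M * (μ₁ * μ₂)
          + a * ∑ i ∈ E, spinVal (x i) * spinVal (y i))
        ≤ ∑ x ∈ slc n μ₁, ∑ y ∈ slc n μ₂,
          Real.exp (a * ∑ i ∈ E, spinVal (x i) * spinVal (y i)) := by
      refine Finset.sum_le_sum fun x _ => Finset.sum_le_sum fun y _ => ?_
      set S := ∑ i ∈ E, spinVal (x i) * spinVal (y i)
      have h1 := Real.add_one_le_exp (a * S - a * M * (μ₁ * μ₂))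
      have h2 : Real.exp (a * S)
          = Real.exp (a * M * (μ₁ * μ₂)) * Real.exp (a * S - a * M * (μ₁ * μ₂)) := by
        rw [← Real.exp_add]; ring_nf
      rw [h2]
      exact mul_le_mul_of_nonneg_left (by linarith) (Real.exp_pos _).le
    have hL : ∑ x ∈ slc n μ₁, ∑ y ∈ slc n μ₂,
        Real.exp (a * M * (μ₁ * μ₂)) * (1 - a * M * (μ₁ * μ₂)
          + a * ∑ i ∈ E, spinVal (x i) * spinVal (y i))
        = Real.exp (a * M * (μ₁ * μ₂)) * D := by
      simp only [← Finset.mul_sum, Finset.sum_add_distrib]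
      rw [hmean]
      simp only [Finset.sum_const, nsmul_eq_mul]
      rw [hDdef]; ring
    rw [hL] at hJ
    refine le_trans ?_ hJ
    refine mul_le_mul_of_nonneg_right ?_ hDpos.le
    have h1 : Real.exp (a * M * (μ₁ * μ₂) - δ * (a * M)) ≤ Real.exp (a * M * (μ₁ * μ₂)) := by
      apply Real.exp_le_exp.2
      have : 0 < δ * (a * M) := by positivity
      linarith
    have h2 : 1 - Real.exp (-(t * δ / 2) * M) ≤ 1 := by
      linarith [Real.exp_pos (-(t * δ / 2) * M)]
    calc _ ≤ Real.exp (a * M * (μ₁ * μ₂) - δ * (a * M)) * 1 :=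
          mul_le_mul_of_nonneg_left h2 (Real.exp_pos _).le
      _ ≤ _ := by linarith
  · have hU : ∑ x ∈ slc n μ₁, ∑ y ∈ slc n μ₂,
          Real.exp (a * ∑ i ∈ E, spinVal (x i) * spinVal (y i))
        ≤ ∑ x ∈ slc n μ₁, ∑ y ∈ slc n μ₂,
          (Real.exp (a * M * (μ₁ * μ₂) + δ * (a * M)) +
            Real.exp (a * M - t * (M * (μ₁ * μ₂) + δ * M)) *
              Real.exp (t * ∑ i ∈ E, spinVal (x i) * spinVal (y i))) := by
      refine Finset.sum_le_sum fun x _ => Finset.sum_le_sum fun y _ => ?_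
      have hSM := abs_spin_sum E x y
      rw [← hM] at hSM
      set S := ∑ i ∈ E, spinVal (x i) * spinVal (y i)
      rw [← Real.exp_add]
      rcases le_total S (M * (μ₁ * μ₂) + δ * M) with h | h
      · have h1 : Real.exp (a * S) ≤ Real.exp (a * M * (μ₁ * μ₂) + δ * (a * M)) := by
          apply Real.exp_le_exp.2
          have := mul_le_mul_of_nonneg_left h ha0.le
          linarith
        linarith [Real.exp_pos (a * M - t * (M * (μ₁ * μ₂) + δ * M) + t * S)]
      · have h1 : Real.exp (a * S)
            ≤ Real.exp (a * M - t * (M * (μ₁ * μ₂) + δ * M) + t * S) := by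
          apply Real.exp_le_exp.2
          have h2 := mul_le_mul_of_nonneg_left hSM ha0.le
          have h3 := mul_le_mul_of_nonneg_left h ht0.le
          linarith
        linarith [Real.exp_pos (a * M * (μ₁ * μ₂) + δ * (a * M))]
    refine hU.trans ?_
    simp only [Finset.sum_add_distrib]
    have hc : ∑ x ∈ slc n μ₁, ∑ y ∈ slc n μ₂, Real.exp (a * M * (μ₁ * μ₂) + δ * (a * M))
        = Real.exp (a * M * (μ₁ * μ₂) + δ * (a * M)) * D := by
      simp only [Finset.sum_const, nsmul_eq_mul]
      rw [hDdef]; ring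
    rw [hc, add_mul]
    refine add_le_add le_rfl ?_
    simp only [← Finset.mul_sum]
    calc _ ≤ Real.exp (a * M - t * (M * (μ₁ * μ₂) + δ * M)) *
          (Real.exp (t * M * (μ₁ * μ₂) + 3 * t ^ 2 * M) * D) :=
          mul_le_mul_of_nonneg_left hfull (Real.exp_pos _).le
      _ = Real.exp (a * M - t * δ * M + 3 * t ^ 2 * M) * D := by
          rw [← mul_assoc, ← Real.exp_add]; ring_nf
      _ ≤ _ := by
          refine mul_le_mul_of_nonneg_right (Real.exp_le_exp.2 ?_) hDpos.le
          have h1 : 0 ≤ t * M * (δ / 6 - t) :=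
            mul_nonneg (by positivity) (by linarith)
          nlinarith

end
end
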